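/- arXiv:1106.4733 — 2 statements merged into one kernel-verified Lean document; each statement's English description precedes it below -/
import Mathlib

section
/- Let a and b be positive integers and set m := a² + ab + b². Define the theta-quark θ_{a,b}(τ,z) := θ(τ,az)·θ(τ,bz)·θ(τ,(a+b)z)/η(τ) on ℍ × ℂ. Then θ_{a,b} is a holomorphic Jacobi form (in the sense of Eichler–Zagier) of weight 1 and index m with character v_η^8: (i) θ_{a,b}((ατ+β)/(γτ+δ), z/(γτ+δ)) = v_η^8(A)·(γτ+δ)·exp(2πi m γz²/(γτ+δ))·θ_{a,b}(τ,z) for all A = (α,β;γ,δ) ∈ SL₂(ℤ); (ii) θ_{a,b}(τ, z+λτ+μ) = exp(−2πi m(λ²τ + 2λz))·θ_{a,b}(τ,z) for all λ,μ ∈ ℤ; (iii) θ_{a,b} is holomorphic on ℍ×ℂ and its Fourier expansion θ_{a,b}(τ,z) = Σ c(n,r)·exp(2πi(nτ+rz)), with n ∈ ℚ, n ≥ 0, r ∈ (1/2)ℤ, satisfies 4nm − r² ≥ 0 whenever c(n,r) ≠ 0. Moreover, if a ≢ b (mod 3) then θ_{a,b} is a Jacobi cusp form: 4nm − r² > 0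 whenever c(n,r) ≠ 0. -/
open Complex Matrix
open scoped Real BigOperators Classical

noncomputable section

abbrev SL2Z := Matrix.SpecialLinearGroup (Fin 2) ℤ

/-- The integral bilinear form attached to a Gram matrix `S`. -/
def bilinZ {ι : Type*} [Fintype ι] (S : Matrix ι ι ℤ) (x y : ι → ℤ) : ℤ :=
  ∑ i, ∑ j, x i * S i j * y j

def bilinQ {ι : Type*} [Fintype ι] (S : Matrix ι ι ℤ) (x y : ι → ℚ) : ℚ :=
  ∑ i, ∑ j, x i * (S i j : ℚ) * y j

def bilinR {ι : Type*} [Fintype ι] (S : Matrix ι ι ℤ) (x y : ι → ℝ) : ℝ :=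
  ∑ i, ∑ j, x i * (S i j : ℝ) * y j

def bilinC {ι : Type*} [Fintype ι] (S : Matrix ι ι ℤ) (x y : ι → ℂ) : ℂ :=
  ∑ i, ∑ j, x i * (S i j : ℂ) * y j

/-- `S` is the Gram matrix of an even positive definite lattice. -/
structure IsEvenPosDef {ι : Type*} [Fintype ι] (S : Matrix ι ι ℤ) : Prop where
  symm : S.IsSymm
  posdef : ∀ x : ι → ℚ, x ≠ 0 → 0 < bilinQ S x x
  even_diag : ∀ i, (2 : ℤ) ∣ S i i

/-- `l ∈ (1/2) L^∨`, written in lattice coordinates:  `2(l,x) ∈ ℤ` for every lattice vector. -/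
def InHalfDual {ι : Type*} [Fintype ι] (S : Matrix ι ι ℤ) (l : ι → ℚ) : Prop :=
  ∀ x : ι → ℤ, ∃ m : ℤ, 2 * bilinQ S l (fun i => (x i : ℚ)) = m

/-- `φ` is a holomorphic Jacobi form of weight `k` and index `t` for the lattice `(ℤ^ι, S)`
with `SL₂(ℤ)`-character (multiplier system) `χ`, Heisenberg character `ν`,
and Fourier coefficients `f`. -/
structure IsJacobiForm {ι : Type*} [Fintype ι] (S : Matrix ι ι ℤ) (k t : ℚ)
    (χ : SL2Z → ℂ) (ν : (ι → ℤ) → (ι → ℤ) → ℂ)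
    (f : ℚ × (ι → ℚ) → ℂ) (φ : ℂ → (ι → ℂ) → ℂ) : Prop where
  holo : DifferentiableOn ℂ (fun p : ℂ × (ι → ℂ) => φ p.1 p.2) {p | 0 < p.1.im}
  modular : ∀ A : SL2Z, ∀ τ : ℂ, 0 < τ.im → ∀ z : ι → ℂ,
    φ (((A.1 0 0 : ℂ) * τ + (A.1 0 1 : ℂ)) / ((A.1 1 0 : ℂ) * τ + (A.1 1 1 : ℂ)))
        (fun i => z i / ((A.1 1 0 : ℂ) * τ + (A.1 1 1 : ℂ)))
      = χ A * ((A.1 1 0 : ℂ) * τ + (A.1 1 1 : ℂ)) ^ (k : ℂ)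
        * Complex.exp ((π : ℂ) * I * (t : ℂ) * (A.1 1 0 : ℂ) * bilinC S z z
            / ((A.1 1 0 : ℂ) * τ + (A.1 1 1 : ℂ)))
        * φ τ z
  elliptic : ∀ x y : ι → ℤ, ∀ τ : ℂ, 0 < τ.im → ∀ z : ι → ℂ,
    φ τ (fun i => z i + (x i : ℂ) * τ + (y i : ℂ))
      = ν x y * Complex.exp (-((π : ℂ) * I * (t : ℂ))
            * ((bilinZ S x x : ℂ) * τ + 2 * bilinC S (fun i => (x i : ℂ)) z))
        * φ τ z
  support : ∀ p : ℚ × (ι → ℚ), f p ≠ 0 →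
    0 ≤ p.1 ∧ InHalfDual S p.2 ∧ 0 ≤ 2 * p.1 * t - bilinQ S p.2 p.2
  expansion : ∀ τ : ℂ, 0 < τ.im → ∀ z : ι → ℂ,
    HasSum (fun p : ℚ × (ι → ℚ) =>
        f p * Complex.exp (2 * (π : ℂ) * I *
          ((p.1 : ℂ) * τ + bilinC S (fun i => (p.2 i : ℂ)) z))) (φ τ z)

/-- The Fourier coefficients `f` are supported on indices of positive hyperbolic norm
(cusp form condition). -/
def IsCuspSupport {ι : Type*} [Fintype ι] (S : Matrix ι ι ℤ) (t : ℚ)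
    (f : ℚ × (ι → ℚ) → ℂ) : Prop :=
  ∀ p : ℚ × (ι → ℚ), f p ≠ 0 → 0 < 2 * p.1 * t - bilinQ S p.2 p.2

/-- `c` is a root of unity. -/
def HasFiniteOrder (c : ℂ) : Prop := ∃ N : ℕ, 0 < N ∧ c ^ N = 1

/-- The quadratic character mod 4. -/
def chi4 (n : ℤ) : ℂ := if n % 4 = 1 then 1 else if n % 4 = 3 then -1 else 0

/-- The classical Jacobi theta-series of characteristic `(1/2,1/2)`. -/
def jtheta (τ z : ℂ) : ℂ :=
  ∑' n : ℤ, chi4 n *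
    Complex.exp (2 * (π : ℂ) * I * (((n : ℂ) ^ 2 * τ) / 8 + (n : ℂ) * z / 2))

/-- The Dedekind eta function. -/
def dedekindEta (τ : ℂ) : ℂ :=
  Complex.exp ((π : ℂ) * I * τ / 12) *
    ∏' n : ℕ, (1 - Complex.exp (2 * (π : ℂ) * I * ((n : ℂ) + 1) * τ))

/-- The theta-quark `θ_{a,b}(τ,z) = θ(τ,az)θ(τ,bz)θ(τ,(a+b)z)/η(τ)`. -/
def thetaQuark (a b : ℤ) (τ z : ℂ) : ℂ :=
  jtheta τ ((a : ℂ) * z) * jtheta τ ((b : ℂ) * z) * jtheta τ (((a : ℂ) + (b : ℂ)) * z)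
    / dedekindEta τ

open Filter Topology in
lemma pent_hasSum {x : ℂ} (hx : ‖x‖ < 1) :
    ∏' n : ℕ, (1 - x ^ (n + 1)) =
      ∑' (k : ℕ), (-1) ^ k * (x ^ pentagonal (-k) - x ^ pentagonal (k + 1)) := by
  have hr0 : 0 ≤ ‖x‖ := norm_nonneg x
  set C : ℝ := Real.exp (∑' i : ℕ, ‖x‖ ^ i) with hC
  have hgs := summable_geometric_of_lt_one hr0 hx
  have hbd : ∀ k n : ℕ, ‖∏ i ∈ Finset.range (n + 1), (1 - x ^ (k + i + 1))‖ ≤ C := by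
    intro k n
    calc ‖∏ i ∈ Finset.range (n + 1), (1 - x ^ (k + i + 1))‖
        = ∏ i ∈ Finset.range (n + 1), ‖1 - x ^ (k + i + 1)‖ := norm_prod _ _
      _ ≤ ∏ i ∈ Finset.range (n + 1), Real.exp (‖x‖ ^ i) := by
          refine Finset.prod_le_prod (fun _ _ => norm_nonneg _) fun i _ => ?_
          calc ‖1 - x ^ (k + i + 1)‖ ≤ 1 + ‖x‖ ^ (k + i + 1) := by
                refine (norm_sub_le _ _).trans ?_
                simp
            _ ≤ ‖x‖ ^ i + 1 := by
                have := pow_le_pow_of_le_one hr0 hx.le (show i ≤ k + i + 1 by omega)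
                linarith
            _ ≤ _ := Real.add_one_le_exp _
      _ = Real.exp (∑ i ∈ Finset.range (n + 1), ‖x‖ ^ i) := (Real.exp_sum _ _).symm
      _ ≤ C := Real.exp_le_exp.2 (hgs.sum_le_tsum _ (fun _ _ => by positivity))
  have hCn : 0 ≤ C := (Real.exp_pos _).le
  have hterm : ∀ k n : ℕ,
      ‖x ^ ((k + 1) * n) * ∏ i ∈ Finset.range (n + 1), (1 - x ^ (k + i + 1))‖ ≤ ‖x‖ ^ n * C := by
    intro k n
    rw [norm_mul, norm_pow]
    refine mul_le_mul ?_ (hbd k n) (norm_nonneg _) (by positivity)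
    exact pow_le_pow_of_le_one hr0 hx.le (by nlinarith)
  have hgC := hgs.mul_right C
  have hpow0 : Tendsto (fun k : ℕ => ‖x‖ ^ k) atTop (𝓝 0) :=
    tendsto_pow_atTop_nhds_zero_of_lt_one hr0 hx
  have hp1 : ∀ k : ℕ, k ≤ pentagonal (-k) := by
    intro k
    have := two_mul_natCast_pentagonal_neg (k : ℤ)
    zify
    nlinarith [sq_nonneg ((k : ℤ)), (Int.natCast_nonneg k : (0:ℤ) ≤ k), Int.le_self_sq (k:ℤ)]
  have hp2 : ∀ k : ℕ, k ≤ pentagonal (k + 1) := by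
    intro k
    have := two_mul_natCast_pentagonal (k + 1 : ℤ)
    zify
    nlinarith [sq_nonneg ((k : ℤ)), (Int.natCast_nonneg k : (0:ℤ) ≤ k)]
  apply Pentagonal.tprod_one_sub_pow
  · exact tendsto_pow_atTop_nhds_zero_of_norm_lt_one hx
  · intro k
    exact Summable.of_norm_bounded hgC (hterm k)
  · intro k
    have := (ModularForm.multipliable_one_sub_pow hx)
    have h2 : Multipliable fun n : ℕ => 1 + -x ^ (n + k + 1) := by
      apply multipliable_one_add_of_summable
      have := (summable_nat_add_iff (k + 1)).mpr hgs
      simpa [add_assoc] using this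
    simpa [sub_eq_add_neg] using h2
  · refine Summable.of_norm_bounded (g := fun k => ‖x‖ ^ k + ‖x‖ ^ k) (hgs.add hgs) fun k => ?_
    rw [norm_mul, norm_pow, norm_neg, norm_one, one_pow, one_mul]
    refine (norm_sub_le _ _).trans ?_
    rw [norm_pow, norm_pow]
    exact add_le_add (pow_le_pow_of_le_one hr0 hx.le (hp1 k))
      (pow_le_pow_of_le_one hr0 hx.le (hp2 k))
  · refine squeeze_zero_norm (a := fun k => ‖x‖ ^ k * ∑' n : ℕ, ‖x‖ ^ n * C) (fun k => ?_) ?_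
    · rw [norm_mul, norm_mul, norm_pow, norm_pow, norm_neg, norm_one, one_pow, one_mul]
      refine mul_le_mul ?_ ?_ (norm_nonneg _) (by positivity)
      · refine pow_le_pow_of_le_one hr0 hx.le ?_
        rw [Nat.le_div_iff_mul_le (by norm_num)]
        nlinarith
      · exact tsum_of_norm_bounded hgC.hasSum (hterm k)
    · simpa using hpow0.mul_const (∑' n : ℕ, ‖x‖ ^ n * C)

lemma norm_q_lt {τ : ℂ} (hτ : 0 < τ.im) : ‖cexp (2 * π * I * τ)‖ < 1 := by
  rw [Complex.norm_exp, Real.exp_lt_one_iff]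
  simp
  positivity

lemma eta_eq_mathlib (τ : ℂ) : dedekindEta τ = ModularForm.eta τ := by
  unfold dedekindEta ModularForm.eta
  congr 1
  · simp only [Function.Periodic.qParam]
    congr 1
    push_cast
    ring
  · refine tprod_congr fun n => ?_
    rw [ModularForm.eta_q_eq_cexp]

lemma eta_ne {τ : ℂ} (hτ : 0 < τ.im) : dedekindEta τ ≠ 0 := by
  rw [eta_eq_mathlib]; exact ModularForm.eta_ne_zero hτ

lemma eta_diff {τ : ℂ} (hτ : 0 < τ.im) : DifferentiableAt ℂ dedekindEta τ := by
  rw [show dedekindEta = ModularForm.eta from funext eta_eq_mathlib]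
  exact ModularForm.differentiableAt_eta_of_mem_upperHalfPlaneSet hτ

/-- `e(x) = exp(2πix)`. -/
def ee (x : ℂ) : ℂ := cexp (2 * π * I * x)

lemma ee_add (x y : ℂ) : ee (x + y) = ee x * ee y := by
  simp only [ee, mul_add, Complex.exp_add]

lemma ee_int (n : ℤ) : ee n = 1 := by
  rw [ee, mul_comm]; exact Complex.exp_int_mul_two_pi_mul_I n

lemma ee_half (n : ℤ) : ee (n / 2) = (-1) ^ n := by
  rw [ee, show 2 * (π : ℂ) * I * (n / 2) = n * (π * I) by ring, Complex.exp_int_mul,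
    Complex.exp_pi_mul_I]

lemma ee_ne (x : ℂ) : ee x ≠ 0 := Complex.exp_ne_zero _

lemma ee_pow (x : ℂ) (n : ℕ) : ee x ^ n = ee (n * x) := by
  rw [ee, ee, ← Complex.exp_nat_mul]; ring_nf

/-- Pentagonal number theorem as an expansion of eta. -/
lemma eta_hasSum {τ : ℂ} (hτ : 0 < τ.im) :
    HasSum (fun n : ℤ => (-1) ^ n * ee (τ * (6 * n + 1) ^ 2 / 24)) (dedekindEta τ) := by
  have hs : Summable (fun n : ℤ => (-1) ^ n * ee (τ * (6 * n + 1) ^ 2 / 24)) := by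
    have h3 : 0 < (3 * τ).im := by simpa using hτ
    have := ((summable_jacobiTheta₂_term_iff (τ / 2 + 1 / 2) (3 * τ)).2 h3).mul_left (ee (τ / 24))
    refine this.congr fun n => ?_
    rw [← ee_half, jacobiTheta₂_term, ee, ee, ee, ← Complex.exp_add, ← Complex.exp_add]
    congr 1
    ring
  have hq := norm_q_lt hτ
  have key : dedekindEta τ = ∑' n : ℤ, (-1) ^ n * ee (τ * (6 * n + 1) ^ 2 / 24) := by
    have h1 : dedekindEta τ = ee (τ / 24) * ∏' n : ℕ, (1 - (ee τ) ^ (n + 1)) := by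
      unfold dedekindEta
      congr 1
      · rw [ee]; congr 1; ring
      · refine tprod_congr fun n => ?_
        rw [ee_pow, ee]; congr 2; push_cast; ring
    rw [h1, pent_hasSum (by exact hq), ← tsum_mul_left, ← tsum_nat_add_neg_add_one hs]
    refine tsum_congr fun k => ?_
    have e1 : ee (τ / 24) * ee τ ^ pentagonal (-k) = ee (τ * (6 * k + 1) ^ 2 / 24) := by
      rw [ee_pow, ← ee_add]
      have := two_mul_natCast_pentagonal_neg (k : ℤ)
      have : 2 * (pentagonal (-k) : ℂ) = k * (3 * k + 1) := by exact_mod_cast this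
      congr 1
      linear_combination τ / 2 * this
    have e2 : ee (τ / 24) * ee τ ^ pentagonal (k + 1) = ee (τ * (6 * (-((k : ℂ) + 1)) + 1) ^ 2 / 24) := by
      rw [ee_pow, ← ee_add]
      have := two_mul_natCast_pentagonal (k + 1 : ℤ)
      have : 2 * (pentagonal (k + 1) : ℂ) = (k + 1) * (3 * (k + 1) - 1) := by exact_mod_cast this
      congr 1
      linear_combination τ / 2 * this
    have e3 : ((-1 : ℂ)) ^ (-((k : ℤ) + 1)) = - (-1) ^ k := by
      rw [_root_.zpow_neg, zpow_add₀ (by norm_num), zpow_natCast, zpow_one, mul_neg_one, inv_neg]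
      rw [← inv_pow]; norm_num
    push_cast
    rw [e3, ← e1, ← e2, zpow_natCast]
    ring
  rw [key]
  exact hs.hasSum

lemma negone_sq (n : ℤ) : ((-1 : ℂ)) ^ (2 * n) = 1 := by
  rw [_root_.zpow_mul]; norm_num

/-- Terms of the theta series. -/
def tht (τ z : ℂ) (k : ℤ) : ℂ := (-1) ^ k * ee ((2 * k + 1) ^ 2 * τ / 8 + (2 * k + 1) * z / 2)

lemma tht_eq (τ z : ℂ) (k : ℤ) :
    tht τ z k = ee (τ / 8 + z / 2) * jacobiTheta₂_term k (z + τ / 2 + 1 / 2) τ := by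
  rw [tht, ← ee_half, jacobiTheta₂_term, ee, ee, ee, ← Complex.exp_add, ← Complex.exp_add]
  congr 1
  ring

lemma tht_summable {τ : ℂ} (hτ : 0 < τ.im) (z : ℂ) : Summable (tht τ z) :=
  (((summable_jacobiTheta₂_term_iff (z + τ / 2 + 1 / 2) τ).2 hτ).mul_left
    (ee (τ / 8 + z / 2))).congr fun n => (tht_eq τ z n).symm

lemma chi4_odd (k : ℤ) : chi4 (2 * k + 1) = (-1) ^ k := by
  rcases Int.even_or_odd' k with ⟨j, rfl | rfl⟩
  · rw [negone_sq, chi4, if_pos (by omega)]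
  · rw [zpow_add₀ (by norm_num), negone_sq, chi4, if_neg (by omega), if_pos (by omega)]; norm_num

lemma chi4_even (k : ℤ) : chi4 (2 * k) = 0 := by
  rw [chi4, if_neg (by omega), if_neg (by omega)]

lemma jtheta_eq_tsum (τ z : ℂ) : jtheta τ z = ∑' k, tht τ z k := by
  have hinj : Function.Injective (fun k : ℤ => 2 * k + 1) := by
    intro a b h; simp only at h; omega
  rw [jtheta, ← hinj.tsum_eq]
  · refine tsum_congr fun k => ?_
    simp only [chi4_odd, tht, ee]
    push_cast
    rfl
  · intro n hn
    rcases Int.even_or_odd' n with ⟨j, rfl | rfl⟩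
    · simp [chi4_even] at hn
    · exact ⟨j, rfl⟩

lemma jtheta_hasSum {τ : ℂ} (hτ : 0 < τ.im) (z : ℂ) : HasSum (tht τ z) (jtheta τ z) := by
  rw [jtheta_eq_tsum]; exact (tht_summable hτ z).hasSum

lemma jtheta_eq (τ z : ℂ) :
    jtheta τ z = ee (τ / 8 + z / 2) * jacobiTheta₂ (z + τ / 2 + 1 / 2) τ := by
  rw [jtheta_eq_tsum, jacobiTheta₂, ← tsum_mul_left]
  exact tsum_congr fun k => tht_eq τ z k

lemma jtheta_elliptic (τ z : ℂ) (l m : ℤ) :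
    jtheta τ (z + l * τ + m) = (-1) ^ (l + m) * ee (-(l ^ 2 * τ + 2 * l * z) / 2) * jtheta τ z := by
  rw [jtheta_eq_tsum, jtheta_eq_tsum, ← tsum_mul_left, ← (Equiv.addRight l).tsum_eq
    (fun k => (-1) ^ (l + m) * ee (-(l ^ 2 * τ + 2 * l * z) / 2) * tht τ z k)]
  refine tsum_congr fun k => ?_
  simp only [Equiv.coe_addRight, tht]
  have h1 : ((-1 : ℂ)) ^ k = (-1) ^ (l + m) * (-1) ^ (k + l) * ee (m / 2) := by
    rw [ee_half, ← zpow_add₀ (by norm_num), ← zpow_add₀ (by norm_num),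
      show l + m + (k + l) + m = k + 2 * (l + m) by ring, zpow_add₀ (by norm_num), negone_sq, mul_one]
  have h2 : ee ((2 * k + 1) ^ 2 * τ / 8 + (2 * k + 1) * (z + l * τ + m) / 2) =
      ee (-(l ^ 2 * τ + 2 * l * z) / 2) *
        ee ((2 * (k + l) + 1) ^ 2 * τ / 8 + (2 * (k + l) + 1) * z / 2) * ee (m / 2) * ee (k * m : ℤ) := by
    rw [← ee_add, ← ee_add, ← ee_add]
    congr 1
    push_cast
    ring
  have h3 : ee ((m : ℂ) / 2) * ee (m / 2) = 1 := by
    rw [← ee_add, ← ee_int m]; congr 1; ring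
  rw [h2, h1, ee_int]
  push_cast
  linear_combination ((-1 : ℂ) ^ (l + m) * (-1) ^ (k + l) * ee (-(l ^ 2 * τ + 2 * l * z) / 2) *
        ee ((2 * (k + l) + 1) ^ 2 * τ / 8 + (2 * (k + l) + 1) * z / 2)) * h3

lemma jtheta_T (τ z : ℂ) : jtheta (τ + 1) z = ee (1 / 8) * jtheta τ z := by
  rw [jtheta_eq_tsum, jtheta_eq_tsum, ← tsum_mul_left]
  refine tsum_congr fun k => ?_
  have : ee ((2 * k + 1) ^ 2 * (τ + 1) / 8 + (2 * k + 1) * z / 2) =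
      ee (1 / 8) * ee ((2 * k + 1) ^ 2 * τ / 8 + (2 * k + 1) * z / 2) := by
    obtain ⟨j, hj⟩ := Int.even_mul_succ_self k
    have hj' : (k : ℂ) * (k + 1) = j + j := by exact_mod_cast hj
    have : (2 * (k : ℂ) + 1) ^ 2 * (τ + 1) / 8 + (2 * k + 1) * z / 2 =
        1 / 8 + ((2 * k + 1) ^ 2 * τ / 8 + (2 * k + 1) * z / 2) + j := by
      linear_combination hj' / 2
    rw [this, ee_add, ee_add, ee_int, mul_one]
  rw [tht, tht, this]; ring

lemma eta_T (τ : ℂ) : dedekindEta (τ + 1) = ee (1 / 24) * dedekindEta τ := by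
  unfold dedekindEta
  rw [← mul_assoc]
  congr 1
  · rw [ee, ← Complex.exp_add]; congr 1; ring
  · refine tprod_congr fun n => ?_
    congr 1
    rw [mul_add, Complex.exp_add]
    have := ee_int (n + 1)
    rw [ee] at this
    push_cast at this
    rw [mul_one, this, mul_one]

lemma im_S {τ : ℂ} (hτ : 0 < τ.im) : 0 < (-1 / τ).im := by
  have : τ ≠ 0 := by rintro rfl; simp at hτ
  rw [neg_div, neg_im, one_div, inv_im, neg_div, neg_neg]
  exact div_pos hτ (normSq_pos.2 this)

lemma jtheta_S {τ : ℂ} (hτ : 0 < τ.im) (z : ℂ) :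
    jtheta (-1 / τ) (z / τ) =
      -I * (-I * τ) ^ (1 / 2 : ℂ) * ee (z ^ 2 / (2 * τ)) * jtheta τ z := by
  have h0 : τ ≠ 0 := by rintro rfl; simp at hτ
  have hI : (-I * τ) ≠ 0 := mul_ne_zero (neg_ne_zero.2 I_ne_zero) h0
  have hI' : (-I * τ) ^ (1 / 2 : ℂ) ≠ 0 := by
    rw [Ne, Complex.cpow_eq_zero_iff]; tauto
  rw [jtheta_eq, jtheta_eq]
  set w := z + τ / 2 + 1 / 2 with hw
  have hF := jacobiTheta₂_functional_equation w τ
  have hA := jacobiTheta₂_add_left' (w / τ) (-1 / τ)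
  rw [show z / τ + -1 / τ / 2 + 1 / 2 = w / τ + -1 / τ by rw [hw]; field_simp; ring, hA, hF]
  have e1 : -I = ee (-1 / 4) := by
    rw [ee, show 2 * (π : ℂ) * I * (-1 / 4) = -(π / 2 * I) by ring, Complex.exp_neg,
      Complex.exp_pi_div_two_mul_I, Complex.inv_I]
  have e2 : ee (-1 / τ / 8 + z / τ / 2) * cexp (-π * I * (-1 / τ + 2 * (w / τ))) =
      ee (-1 / 4) * ee (z ^ 2 / (2 * τ)) * ee (τ / 8 + z / 2) * cexp (-π * I * w ^ 2 / τ) := by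
    simp only [ee, ← Complex.exp_add]
    congr 1
    rw [hw]
    field_simp
    ring
  rw [← e1] at e2
  have hs : (-I * τ) ^ (1 / 2 : ℂ) * (1 / (-I * τ) ^ (1 / 2 : ℂ)) = 1 := mul_one_div_cancel hI'
  generalize (-I * τ) ^ (1 / 2 : ℂ) = s at hs ⊢
  linear_combination jacobiTheta₂ (w / τ) (-1 / τ) * e2 - jacobiTheta₂ (w / τ) (-1 / τ) *
    (-I * ee (z ^ 2 / (2 * τ)) * ee (τ / 8 + z / 2) * cexp (-π * I * w ^ 2 / τ)) * hs

lemma jtheta_diff {τ : ℂ} (hτ : 0 < τ.im) (c z : ℂ) :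
    DifferentiableAt ℂ (fun p : ℂ × ℂ => jtheta p.1 (c * p.2)) (τ, z) := by
  have : (fun p : ℂ × ℂ => jtheta p.1 (c * p.2)) = fun p : ℂ × ℂ =>
      cexp (2 * π * I * (p.1 / 8 + (c * p.2) / 2)) *
        jacobiTheta₂ (c * p.2 + p.1 / 2 + 1 / 2) p.1 := by
    funext p; exact jtheta_eq _ _
  rw [this]
  refine DifferentiableAt.mul (by fun_prop) ?_
  have h := (hasFDerivAt_jacobiTheta₂ (c * z + τ / 2 + 1 / 2) hτ).differentiableAt
  exact DifferentiableAt.comp (𝕜 := ℂ) (τ, z)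
    (g := fun p : ℂ × ℂ => jacobiTheta₂ p.1 p.2)
    (f := fun p : ℂ × ℂ => (c * p.2 + p.1 / 2 + 1 / 2, p.1)) h (by fun_prop)

/-- Minus the quadratic character mod 3. -/
def eps (w : ℤ) : ℂ := if w % 3 = 1 then -1 else if w % 3 = 2 then 1 else 0

lemma inner_hasSum {τ : ℂ} (hτ : 0 < τ.im) (w : ℤ) :
    HasSum (fun t : ℤ => (-1) ^ (w + t) * ee (τ * (2 * w + 6 * t - 3) ^ 2 / 24))
      (eps w * dedekindEta τ) := by
  have hη := eta_hasSum hτ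
  have hcases : w % 3 = 0 ∨ w % 3 = 1 ∨ w % 3 = 2 := by omega
  rcases hcases with h | h | h
  · obtain ⟨v, rfl⟩ : ∃ v, w = 3 * v := ⟨w / 3, by omega⟩
    have he : eps (3 * v) = 0 := by rw [eps, if_neg (by omega), if_neg (by omega)]
    rw [he, zero_mul]
    set f := fun t : ℤ => (-1 : ℂ) ^ (3 * v + t) *
      ee (τ * (2 * ((3 * v : ℤ) : ℂ) + 6 * t - 3) ^ 2 / 24) with hf
    have hs : Summable f := by
      have h3 : 0 < (3 * τ).im := by simpa using hτ
      have := (((summable_jacobiTheta₂_term_iff (3 * v * τ - 3 / 2 * τ + 1 / 2) (3 * τ)).2 h3).mul_left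
        (ee (τ * (6 * v - 3) ^ 2 / 24 + ((3 * v : ℤ) : ℂ) / 2)))
      refine this.congr fun t => ?_
      rw [hf]
      simp only
      rw [← ee_half, jacobiTheta₂_term, ee, ee, ee, ← Complex.exp_add, ← Complex.exp_add]
      congr 1
      push_cast
      ring
    have hz : ∑' t, f t = 0 := by
      have h1 : ∑' t, f t = ∑' t, f (1 - 2 * v - t) :=
        ((Equiv.subLeft (1 - 2 * v)).tsum_eq f).symm
      have h2 : ∀ t, f (1 - 2 * v - t) = - f t := by
        intro t
        simp only [hf]
        have : ((-1 : ℂ)) ^ (3 * v + (1 - 2 * v - t)) = - (-1) ^ (3 * v + t) := by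
          rw [show 3 * v + (1 - 2 * v - t) = 3 * v + t + (2 * (-v - t) + 1) by ring,
            zpow_add₀ (by norm_num) (3 * v + t), zpow_add₀ (by norm_num) (2 * (-v - t)), negone_sq]
          norm_num
        rw [this, neg_mul]
        congr 3
        push_cast
        ring
      rw [tsum_congr h2, tsum_neg] at h1
      exact self_eq_neg.1 h1
    rw [← hz]
    exact hs.hasSum
  · obtain ⟨v, rfl⟩ : ∃ v, w = 3 * v + 1 := ⟨w / 3, by omega⟩
    have he : eps (3 * v + 1) = -1 := by rw [eps, if_pos (by omega)]
    rw [he]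
    refine (((Equiv.subLeft (-v)).hasSum_iff.2 hη).mul_left (-1)).congr_fun ?_
    intro t
    simp only [Function.comp, Equiv.subLeft_apply]
    have : ((-1 : ℂ)) ^ (3 * v + 1 + t) = - (-1) ^ (-v - t) := by
      rw [show 3 * v + 1 + t = -v - t + (2 * (2 * v + t) + 1) by ring,
        zpow_add₀ (by norm_num), zpow_add₀ (by norm_num), negone_sq]
      norm_num
    rw [this, ← mul_assoc, neg_one_mul]
    congr 2
    push_cast
    ring
  · obtain ⟨v, rfl⟩ : ∃ v, w = 3 * v + 2 := ⟨w / 3, by omega⟩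
    have he : eps (3 * v + 2) = 1 := by rw [eps, if_neg (by omega), if_pos (by omega)]
    rw [he]
    refine (((Equiv.addLeft v).hasSum_iff.2 hη).mul_left 1).congr_fun ?_
    intro t
    simp only [Function.comp, Equiv.coe_addLeft]
    have : ((-1 : ℂ)) ^ (3 * v + 2 + t) = (-1) ^ (v + t) := by
      rw [show 3 * v + 2 + t = v + t + (2 * (v + 1)) by ring,
        zpow_add₀ (by norm_num), negone_sq, mul_one]
    rw [this, one_mul]
    congr 2
    push_cast
    ring

/-- Change of summation variables. -/
def chg : (ℤ × ℤ) × ℤ ≃ ℤ × (ℤ × ℤ) where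
  toFun p := (p.1.1 - 1 + p.2, p.1.2 - 1 + p.2, -p.2)
  invFun k := ((k.1 + k.2.2 + 1, k.2.1 + k.2.2 + 1), -k.2.2)
  left_inv p := by ext <;> simp
  right_inv p := by ext <;> simp

/-- The A₂ Macdonald identity. -/
lemma quark_hasSum (a b : ℤ) {τ : ℂ} (hτ : 0 < τ.im) (z : ℂ) :
    HasSum (fun p : ℤ × ℤ => eps (p.1 + p.2) *
      ee (((p.1 ^ 2 - p.1 * p.2 + p.2 ^ 2) / 3 : ℂ) * τ + (a * p.1 + b * p.2 : ℂ) * z))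
      (thetaQuark a b τ z) := by
  have h1 := jtheta_hasSum hτ (a * z)
  have h2 := jtheta_hasSum hτ (b * z)
  have h3 := jtheta_hasSum hτ ((a + b) * z)
  have s23 := summable_mul_of_summable_norm h2.summable.norm h3.summable.norm
  have h23 := h2.mul h3 s23
  have s123 := summable_mul_of_summable_norm h1.summable.norm s23.norm
  have h123 := h1.mul h23 s123
  have h := chg.hasSum_iff.2 h123
  have hη := eta_ne hτ
  have hfib := h.prod_fiberwise (g := fun p : ℤ × ℤ =>
    ee (((p.1 ^ 2 - p.1 * p.2 + p.2 ^ 2) / 3 : ℂ) * τ + (a * p.1 + b * p.2 : ℂ) * z) *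
      (eps (p.1 + p.2) * dedekindEta τ)) (by
    rintro ⟨X, Y⟩
    refine ((inner_hasSum hτ (X + Y)).mul_left _).congr_fun ?_
    intro t
    simp only [Function.comp, chg, Equiv.coe_fn_mk, tht]
    have hsg : ((-1 : ℂ)) ^ (X + Y + t) = (-1) ^ (X - 1 + t) * ((-1) ^ (Y - 1 + t) * (-1) ^ (-t)) := by
      rw [← zpow_add₀ (by norm_num), ← zpow_add₀ (by norm_num),
        show X - 1 + t + (Y - 1 + t + -t) = X + Y + t + 2 * (-1) by ring, zpow_add₀ (by norm_num) _ (2 * (-1)),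
        negone_sq, mul_one]
    rw [hsg]
    have hE : ∀ x1 x2 x3 e1 e2 e3 e4 e5 : ℂ, e1 * (e2 * e3) = e4 * e5 →
        x1 * e1 * (x2 * e2 * (x3 * e3)) = e4 * (x1 * (x2 * x3) * e5) := by
      intro x1 x2 x3 e1 e2 e3 e4 e5 he
      linear_combination x1 * x2 * x3 * he
    apply hE
    rw [← ee_add, ← ee_add, ← ee_add]
    congr 1
    push_cast
    ring)
  have := hfib.div_const (dedekindEta τ)
  rw [thetaQuark, mul_assoc (jtheta _ _)]
  refine this.congr_fun ?_
  rintro ⟨X, Y⟩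
  simp only
  field_simp

lemma quark_elliptic (a b l m : ℤ) (τ z : ℂ) :
    thetaQuark a b τ (z + l * τ + m) =
      cexp (-(2 * (π : ℂ) * I * ((a ^ 2 + a * b + b ^ 2 : ℤ) : ℂ)) * ((l : ℂ) ^ 2 * τ + 2 * l * z))
        * thetaQuark a b τ z := by
  have h1 := jtheta_elliptic τ (a * z) (a * l) (a * m)
  have h2 := jtheta_elliptic τ (b * z) (b * l) (b * m)
  have h3 := jtheta_elliptic τ ((a + b) * z) ((a + b) * l) ((a + b) * m)
  rw [show (a : ℂ) * z + ((a * l : ℤ) : ℂ) * τ + ((a * m : ℤ) : ℂ) = a * (z + l * τ + m) by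
    push_cast; ring] at h1
  rw [show (b : ℂ) * z + ((b * l : ℤ) : ℂ) * τ + ((b * m : ℤ) : ℂ) = b * (z + l * τ + m) by
    push_cast; ring] at h2
  rw [show ((a : ℂ) + b) * z + (((a + b) * l : ℤ) : ℂ) * τ + (((a + b) * m : ℤ) : ℂ) =
    (a + b) * (z + l * τ + m) by push_cast; ring] at h3
  have hs : ((-1 : ℂ)) ^ (a * l + a * m) * (-1) ^ (b * l + b * m) *
      (-1) ^ ((a + b) * l + (a + b) * m) = 1 := by
    rw [← zpow_add₀ (by norm_num), ← zpow_add₀ (by norm_num), 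
      show a * l + a * m + (b * l + b * m) + ((a + b) * l + (a + b) * m) =
        2 * ((a + b) * (l + m)) by ring, negone_sq]
  have he : cexp (-(2 * (π : ℂ) * I * ((a ^ 2 + a * b + b ^ 2 : ℤ) : ℂ)) * ((l : ℂ) ^ 2 * τ + 2 * l * z))
      = ee (-(((a * l : ℤ) : ℂ) ^ 2 * τ + 2 * ((a * l : ℤ) : ℂ) * (a * z)) / 2) *
        ee (-(((b * l : ℤ) : ℂ) ^ 2 * τ + 2 * ((b * l : ℤ) : ℂ) * (b * z)) / 2) *
        ee (-((((a + b) * l : ℤ) : ℂ) ^ 2 * τ + 2 * (((a + b) * l : ℤ) : ℂ) * ((a + b) * z)) / 2) := by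
    simp only [ee, ← Complex.exp_add]
    congr 1
    push_cast
    ring
  rw [thetaQuark, thetaQuark, h1, h2, h3, he, ← mul_div_assoc]
  congr 1
  generalize (-1 : ℂ) ^ (a * l + a * m) = x1 at *
  generalize (-1 : ℂ) ^ (b * l + b * m) = x2 at *
  generalize (-1 : ℂ) ^ ((a + b) * l + (a + b) * m) = x3 at *
  generalize ee (-(((a * l : ℤ) : ℂ) ^ 2 * τ + 2 * ((a * l : ℤ) : ℂ) * (a * z)) / 2) = y1
  generalize ee (-(((b * l : ℤ) : ℂ) ^ 2 * τ + 2 * ((b * l : ℤ) : ℂ) * (b * z)) / 2) = y2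
  generalize ee (-((((a + b) * l : ℤ) : ℂ) ^ 2 * τ + 2 * (((a + b) * l : ℤ) : ℂ) * ((a + b) * z)) / 2) = y3
  linear_combination (y1 * y2 * y3 * jtheta τ (a * z) * jtheta τ (b * z) * jtheta τ ((a + b) * z)) * hs

lemma quark_diff (a b : ℤ) :
    DifferentiableOn ℂ (fun p : ℂ × ℂ => thetaQuark a b p.1 p.2) {p | 0 < p.1.im} := by
  rintro ⟨τ, z⟩ hτ
  have hτ : 0 < τ.im := hτ
  refine DifferentiableAt.differentiableWithinAt ?_
  unfold thetaQuark
  simp only [div_eq_mul_inv]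
  refine DifferentiableAt.mul (((jtheta_diff hτ a z).mul (jtheta_diff hτ b z)).mul
    (jtheta_diff hτ (a + b) z)) (DifferentiableAt.fun_inv ?_ (eta_ne hτ))
  exact DifferentiableAt.comp (𝕜 := ℂ) (τ, z) (g := dedekindEta) (f := Prod.fst)
    (eta_diff hτ) differentiableAt_fst

/-- Fourier expansion, grouped by exponents. -/
lemma quark_fourier (a b : ℤ) :
    ∃ c : ℚ × ℚ → ℂ,
      (∀ p, c p ≠ 0 →
        0 ≤ p.1 ∧ (∃ j : ℤ, 2 * p.2 = (j : ℚ)) ∧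
        0 ≤ 4 * p.1 * ((a ^ 2 + a * b + b ^ 2 : ℤ) : ℚ) - p.2 ^ 2) ∧
      (∀ τ : ℂ, 0 < τ.im → ∀ z : ℂ,
        HasSum (fun p : ℚ × ℚ =>
            c p * Complex.exp (2 * (π : ℂ) * I * ((p.1 : ℂ) * τ + (p.2 : ℂ) * z)))
          (thetaQuark a b τ z)) ∧
      (¬ a ≡ b [ZMOD 3] → ∀ p, c p ≠ 0 →
        0 < 4 * p.1 * ((a ^ 2 + a * b + b ^ 2 : ℤ) : ℚ) - p.2 ^ 2) := by
  let g : ℤ × ℤ → ℚ × ℚ := fun p =>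
    (((p.1 : ℚ) ^ 2 - p.1 * p.2 + p.2 ^ 2) / 3, (a : ℚ) * p.1 + b * p.2)
  let c : ℚ × ℚ → ℂ := fun q => ∑' x : g ⁻¹' {q}, eps (x.1.1 + x.1.2)
  have hc : ∀ q, c q ≠ 0 → ∃ p : ℤ × ℤ, g p = q ∧ eps (p.1 + p.2) ≠ 0 := by
    intro q hq
    by_contra! hcon
    refine hq ?_
    simp only [c]
    rw [tsum_congr (g := fun _ => 0), tsum_zero]
    rintro ⟨p, hp⟩
    exact hcon p hp
  have key : ∀ X Y : ℤ, 4 * (((X : ℚ) ^ 2 - X * Y + Y ^ 2) / 3) * ((a ^ 2 + a * b + b ^ 2 : ℤ) : ℚ) -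
      ((a : ℚ) * X + b * Y) ^ 2 = (((a + 2 * b) * X - (2 * a + b) * Y : ℤ) : ℚ) ^ 2 / 3 := by
    intro X Y
    push_cast
    ring
  refine ⟨c, ?_, ?_, ?_⟩
  · intro q hq
    obtain ⟨⟨X, Y⟩, rfl, -⟩ := hc q hq
    simp only [g]
    refine ⟨?_, ⟨2 * (a * X + b * Y), by push_cast; ring⟩, ?_⟩
    · nlinarith [sq_nonneg ((X : ℚ) - Y), sq_nonneg (X : ℚ), sq_nonneg (Y : ℚ)]
    · rw [key]; positivity
  · intro τ hτ z
    have h := (quark_hasSum a b hτ z).tsum_fiberwise g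
    refine h.congr_fun ?_
    intro q
    simp only [c]
    rw [← tsum_mul_right]
    refine tsum_congr ?_
    rintro ⟨p, hp⟩
    have hp : g p = q := hp
    subst hp
    simp only [g, ee]
    congr 2
    push_cast
    ring
  · intro hab q hq
    obtain ⟨⟨X, Y⟩, rfl, hne⟩ := hc q hq
    simp only [g]
    rw [key]
    refine div_pos (sq_pos_of_ne_zero ?_) (by norm_num)
    intro h0
    have h0 : (a + 2 * b) * X - (2 * a + b) * Y = 0 := by exact_mod_cast h0
    have h3 : (3 : ℤ) ∣ (a - b) * (X + Y) := ⟨a * Y - b * X, by linear_combination h0⟩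
    rcases (Int.prime_three).dvd_or_dvd h3 with h | h
    · exact hab (Int.modEq_iff_dvd.2 (by rw [← neg_sub]; exact h.neg_right)) 
    · refine hne ?_
      simp only [eps]
      rw [if_neg (by omega), if_neg (by omega)]

/-- Automorphy factor. -/
def jj (A : SL2Z) (τ : ℂ) : ℂ := (A.1 1 0 : ℂ) * τ + (A.1 1 1 : ℂ)

/-- Moebius action. -/
def mob (A : SL2Z) (τ : ℂ) : ℂ := ((A.1 0 0 : ℂ) * τ + (A.1 0 1 : ℂ)) / jj A τ

lemma det_eq (A : SL2Z) : (A.1 0 0 : ℂ) * A.1 1 1 - A.1 0 1 * A.1 1 0 = 1 := by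
  have := A.2
  rw [Matrix.det_fin_two] at this
  exact_mod_cast this

lemma jj_ne (A : SL2Z) {τ : ℂ} (hτ : 0 < τ.im) : jj A τ ≠ 0 := by
  intro h
  have hi : (jj A τ).im = A.1 1 0 * τ.im := by simp [jj]
  have hr : (jj A τ).re = A.1 1 0 * τ.re + A.1 1 1 := by simp [jj]
  rw [h] at hi hr
  have hc : (A.1 1 0 : ℝ) = 0 := by
    rcases mul_eq_zero.1 hi.symm with h | h
    · exact h
    · exact absurd h hτ.ne'
  rw [hc] at hr
  have hd : (A.1 1 1 : ℝ) = 0 := by simpa using hr.symm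
  have hc' : A.1 1 0 = 0 := by exact_mod_cast hc
  have hd' : A.1 1 1 = 0 := by exact_mod_cast hd
  have := A.2
  rw [Matrix.det_fin_two, hc', hd'] at this
  simp at this

lemma mob_im (A : SL2Z) {τ : ℂ} (hτ : 0 < τ.im) : 0 < (mob A τ).im := by
  have h : (mob A τ).im = τ.im / normSq (jj A τ) := by
    have hd : (A.1 0 0 : ℝ) * A.1 1 1 - A.1 0 1 * A.1 1 0 = 1 := by
      have := A.2
      rw [Matrix.det_fin_two] at this
      exact_mod_cast this
    rw [mob, Complex.div_im]
    have hi : (jj A τ).im = A.1 1 0 * τ.im := by simp [jj]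
    have hr : (jj A τ).re = A.1 1 0 * τ.re + A.1 1 1 := by simp [jj]
    rw [← sub_div, hi, hr]
    congr 1
    simp
    linear_combination τ.im * hd
  rw [h]
  exact div_pos hτ (normSq_pos.2 (jj_ne A hτ))

lemma jj_mul (A B : SL2Z) {τ : ℂ} (hτ : 0 < τ.im) : jj (A * B) τ = jj A (mob B τ) * jj B τ := by
  have hB := jj_ne B hτ
  rw [jj, jj, mob, add_mul, mul_assoc, div_mul_cancel₀ _ hB]
  simp only [Matrix.SpecialLinearGroup.coe_mul, Matrix.mul_apply, Fin.sum_univ_two, jj]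
  push_cast
  ring

lemma mob_mul (A B : SL2Z) {τ : ℂ} (hτ : 0 < τ.im) : mob (A * B) τ = mob A (mob B τ) := by
  have hB := jj_ne B hτ
  have hA := jj_ne A (mob_im B hτ)
  have : ((A.1 0 0 : ℂ) * mob B τ + A.1 0 1) * jj B τ =
      ((A * B).1 0 0 : ℂ) * τ + ((A * B).1 0 1 : ℂ) := by
    rw [mob, add_mul, mul_assoc, div_mul_cancel₀ _ hB]
    simp only [Matrix.SpecialLinearGroup.coe_mul, Matrix.mul_apply, Fin.sum_univ_two, jj]
    push_cast
    ring
  have h2 : mob (A * B) τ = ((A.1 0 0 : ℂ) * mob B τ + A.1 0 1) * jj B τ /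
      (jj A (mob B τ) * jj B τ) := by
    rw [this, ← jj_mul A B hτ, mob]
  rw [h2, mul_div_mul_right _ _ hB]
  rfl

lemma cocycle (A B : SL2Z) {τ : ℂ} (hτ : 0 < τ.im) (z : ℂ) :
    (A.1 1 0 : ℂ) * (z / jj B τ) ^ 2 / jj A (mob B τ) + (B.1 1 0 : ℂ) * z ^ 2 / jj B τ =
      ((A * B).1 1 0 : ℂ) * z ^ 2 / jj (A * B) τ := by
  have hB := jj_ne B hτ
  have hA := jj_ne A (mob_im B hτ)
  have hAB := jj_ne (A * B) hτ
  have hm := jj_mul A B hτ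
  have key : (B.1 1 0 : ℂ) * jj (A * B) τ + A.1 1 0 = ((A * B).1 1 0 : ℂ) * jj B τ := by
    simp only [Matrix.SpecialLinearGroup.coe_mul, Matrix.mul_apply, Fin.sum_univ_two, jj]
    push_cast
    linear_combination -(A.1 1 0 : ℂ) * det_eq B
  rw [hm] at key ⊢
  field_simp
  linear_combination z ^ 2 * key

open Filter Topology in
/-- The `S`-transformation of eta, given it up to an eighth root of unity. -/
lemma eta_S_of_pow (h8 : ∀ τ : ℂ, 0 < τ.im → dedekindEta (-1 / τ) ^ 8 = τ ^ 4 * dedekindEta τ ^ 8)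
    {τ : ℂ} (hτ : 0 < τ.im) :
    dedekindEta (-1 / τ) = (-I * τ) ^ (1 / 2 : ℂ) * dedekindEta τ := by
  let U : Set ℂ := {τ | 0 < τ.im}
  have hU : IsPreconnected U := (convex_halfSpace_im_gt 0).isPreconnected
  let u : ℂ → ℂ := fun τ => dedekindEta (-1 / τ) / ((-I * τ) ^ (1 / 2 : ℂ) * dedekindEta τ)
  have h0 : ∀ τ ∈ U, τ ≠ 0 := by rintro τ hτ rfl; simp [U] at hτ
  have hs0 : ∀ τ ∈ U, (-I * τ) ^ (1 / 2 : ℂ) ≠ 0 := by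
    intro τ hτ
    have := h0 τ hτ
    rw [Ne, Complex.cpow_eq_zero_iff]
    simp [this]
  have hs2 : ∀ τ ∈ U, ((-I * τ) ^ (1 / 2 : ℂ)) ^ 8 = τ ^ 4 := by
    intro τ hτ
    rw [← Complex.cpow_nat_mul, show ((8 : ℕ) : ℂ) * (1 / 2) = (4 : ℕ) by norm_num,
      Complex.cpow_natCast, mul_pow, neg_pow, I_pow_four]
    norm_num
  have hcont : ContinuousOn u U := by
    intro τ hτ
    refine ContinuousAt.continuousWithinAt ?_
    refine ContinuousAt.div ?_ (ContinuousAt.mul ?_ (eta_diff hτ).continuousAt)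
      (mul_ne_zero (hs0 τ hτ) (eta_ne hτ))
    · exact ContinuousAt.comp (g := dedekindEta) (f := fun τ : ℂ => -1 / τ)
        (eta_diff (im_S hτ)).continuousAt (continuousAt_const.div continuousAt_id (h0 τ hτ))
    · refine ContinuousAt.cpow (by fun_prop) continuousAt_const ?_
      left
      have hτ' : 0 < τ.im := hτ
      simpa using hτ'
  have hpow : ∀ τ ∈ U, u τ ^ 8 = 1 := by
    intro τ hτ
    simp only [u]
    rw [div_pow, h8 τ hτ, mul_pow, hs2 τ hτ, div_self]
    exact mul_ne_zero (pow_ne_zero _ (h0 τ hτ)) (pow_ne_zero _ (eta_ne hτ))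
  have hI : I ∈ U := by simp [U]
  have huI : u I = 1 := by
    simp only [u]
    rw [show -1 / I = I by rw [div_eq_iff I_ne_zero, I_mul_I],
      show -I * I = 1 by rw [neg_mul, I_mul_I, neg_neg], Complex.one_cpow, one_mul]
    exact div_self (eta_ne hI)
  have hfin : (u '' U).Finite := by
    refine Set.Finite.subset (Polynomial.nthRootsFinset 8 (1 : ℂ)).finite_toSet ?_
    rintro _ ⟨τ, hτ, rfl⟩
    rw [Finset.mem_coe, Polynomial.mem_nthRootsFinset (by norm_num)]
    exact hpow τ hτ
  have hsub : (u '' U).Subsingleton := by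
    by_contra hns
    have hnt := Set.not_subsingleton_iff.1 hns
    exact (hU.image u hcont).infinite_of_nontrivial hnt hfin
  have h1 : u τ = 1 := by
    rw [← huI]
    exact hsub ⟨τ, hτ, rfl⟩ ⟨I, hI, rfl⟩
  simp only [u] at h1
  rw [div_eq_one_iff_eq (mul_ne_zero (hs0 τ hτ) (eta_ne hτ))] at h1
  exact h1

lemma quark_modular (a b : ℤ) (v : SL2Z → ℂ)
    (hv : ∀ A : SL2Z, ∀ τ : ℂ, 0 < τ.im →
      dedekindEta (mob A τ) ^ 8 = v A * (jj A τ) ^ 4 * dedekindEta τ ^ 8) (A : SL2Z) :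
    ∀ τ : ℂ, 0 < τ.im → ∀ z : ℂ,
      thetaQuark a b (mob A τ) (z / jj A τ)
        = v A * jj A τ
          * Complex.exp (2 * (π : ℂ) * I * ((a ^ 2 + a * b + b ^ 2 : ℤ) : ℂ) * (A.1 1 0 : ℂ)
              * z ^ 2 / jj A τ)
          * thetaQuark a b τ z := by
  have hIim : 0 < (I : ℂ).im := by simp
  have hmulv : ∀ A B, v (A * B) = v A * v B := by
    intro A B
    have h1 := hv (A * B) I hIim
    have h2 := hv A _ (mob_im B hIim)
    have h3 := hv B I hIim
    rw [mob_mul A B hIim, h2, h3, jj_mul A B hIim] at h1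
    have hne : (jj A (mob B I) * jj B I) ^ 4 * dedekindEta I ^ 8 ≠ 0 :=
      mul_ne_zero (pow_ne_zero _ (mul_ne_zero (jj_ne A (mob_im B hIim)) (jj_ne B hIim)))
        (pow_ne_zero _ (eta_ne hIim))
    apply mul_right_cancel₀ hne
    linear_combination -h1
  have hmul : ∀ A B : SL2Z, (∀ τ : ℂ, 0 < τ.im → ∀ z : ℂ,
      thetaQuark a b (mob A τ) (z / jj A τ)
        = v A * jj A τ
          * Complex.exp (2 * (π : ℂ) * I * ((a ^ 2 + a * b + b ^ 2 : ℤ) : ℂ) * (A.1 1 0 : ℂ)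
              * z ^ 2 / jj A τ)
          * thetaQuark a b τ z) → (∀ τ : ℂ, 0 < τ.im → ∀ z : ℂ,
      thetaQuark a b (mob B τ) (z / jj B τ)
        = v B * jj B τ
          * Complex.exp (2 * (π : ℂ) * I * ((a ^ 2 + a * b + b ^ 2 : ℤ) : ℂ) * (B.1 1 0 : ℂ)
              * z ^ 2 / jj B τ)
          * thetaQuark a b τ z) → (∀ τ : ℂ, 0 < τ.im → ∀ z : ℂ,
      thetaQuark a b (mob (A * B) τ) (z / jj (A * B) τ)
        = v (A * B) * jj (A * B) τ
          * Complex.exp (2 * (π : ℂ) * I * ((a ^ 2 + a * b + b ^ 2 : ℤ) : ℂ) * ((A * B).1 1 0 : ℂ)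
              * z ^ 2 / jj (A * B) τ)
          * thetaQuark a b τ z) := by
    intro A B hA hB τ hτ z
    have e := cocycle A B hτ z
    have hexp : Complex.exp (2 * (π : ℂ) * I * ((a ^ 2 + a * b + b ^ 2 : ℤ) : ℂ) *
          ((A * B).1 1 0 : ℂ) * z ^ 2 / jj (A * B) τ) =
        Complex.exp (2 * (π : ℂ) * I * ((a ^ 2 + a * b + b ^ 2 : ℤ) : ℂ) * (A.1 1 0 : ℂ)
              * (z / jj B τ) ^ 2 / jj A (mob B τ)) *
        Complex.exp (2 * (π : ℂ) * I * ((a ^ 2 + a * b + b ^ 2 : ℤ) : ℂ) * (B.1 1 0 : ℂ)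
              * z ^ 2 / jj B τ) := by
      rw [← Complex.exp_add]
      congr 1
      linear_combination -(2 * (π : ℂ) * I * ((a ^ 2 + a * b + b ^ 2 : ℤ) : ℂ)) * e
    rw [hexp, mob_mul A B hτ, hmulv, jj_mul A B hτ, mul_comm (jj A _) (jj B _), ← div_div,
      hA _ (mob_im B hτ), hB τ hτ]
    ring
  have hS : ∀ τ : ℂ, 0 < τ.im → ∀ z : ℂ,
      thetaQuark a b (mob ModularGroup.S τ) (z / jj ModularGroup.S τ)
        = v ModularGroup.S * jj ModularGroup.S τ
          * Complex.exp (2 * (π : ℂ) * I * ((a ^ 2 + a * b + b ^ 2 : ℤ) : ℂ)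
              * (ModularGroup.S.1 1 0 : ℂ) * z ^ 2 / jj ModularGroup.S τ)
          * thetaQuark a b τ z := by
    have hj : ∀ τ, jj ModularGroup.S τ = τ := by intro τ; simp [jj, ModularGroup.S]
    have hm : ∀ τ, mob ModularGroup.S τ = -1 / τ := by
      intro τ; rw [mob, hj]; simp [ModularGroup.S]
    have hc : (ModularGroup.S.1 1 0 : ℂ) = 1 := by simp [ModularGroup.S]
    have hvS : v ModularGroup.S = 1 := by
      have h := hv ModularGroup.S I hIim
      rw [hm, hj, show -1 / I = I by rw [div_eq_iff I_ne_zero, I_mul_I], I_pow_four, mul_one] at h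
      have hne := pow_ne_zero 8 (eta_ne hIim)
      apply mul_right_cancel₀ hne
      rw [one_mul]; exact h.symm
    have h8 : ∀ τ : ℂ, 0 < τ.im → dedekindEta (-1 / τ) ^ 8 = τ ^ 4 * dedekindEta τ ^ 8 := by
      intro τ hτ
      have h := hv ModularGroup.S τ hτ
      rwa [hm, hj, hvS, one_mul] at h
    intro τ hτ z
    have h0 : τ ≠ 0 := by rintro rfl; simp at hτ
    rw [hm, hj, hvS, hc, one_mul, mul_one]
    have h1 := jtheta_S hτ (a * z)
    have h2 := jtheta_S hτ (b * z)
    have h3 := jtheta_S hτ ((a + b) * z)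
    have h4 := eta_S_of_pow h8 hτ
    have hs : ((-I * τ) ^ (1 / 2 : ℂ)) ^ 2 = -I * τ := by
      rw [← Complex.cpow_nat_mul]; norm_num
    have hs0 : (-I * τ) ^ (1 / 2 : ℂ) ≠ 0 := by
      intro h
      rw [h] at hs
      simp [h0] at hs
    have he : Complex.exp (2 * (π : ℂ) * I * ((a ^ 2 + a * b + b ^ 2 : ℤ) : ℂ) * z ^ 2 / τ) =
        ee ((a * z) ^ 2 / (2 * τ)) * ee ((b * z) ^ 2 / (2 * τ)) * ee (((a + b) * z) ^ 2 / (2 * τ)) := by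
      simp only [ee, ← Complex.exp_add]
      congr 1
      push_cast
      field_simp
      ring
    have hη := eta_ne hτ
    rw [mul_div_assoc] at h1 h2 h3
    rw [thetaQuark, thetaQuark, h1, h2, h3, h4, he]
    generalize (-I * τ) ^ (1 / 2 : ℂ) = s at hs hs0 ⊢
    generalize jtheta τ ((a:ℂ) * z) = t1
    generalize jtheta τ ((b:ℂ) * z) = t2
    generalize jtheta τ (((a:ℂ) + b) * z) = t3
    generalize ee (((a:ℂ) * z) ^ 2 / (2 * τ)) = y1
    generalize ee (((b:ℂ) * z) ^ 2 / (2 * τ)) = y2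
    generalize ee ((((a:ℂ) + b) * z) ^ 2 / (2 * τ)) = y3
    field_simp
    rw [show I ^ 3 = -I by rw [pow_succ, I_sq]; ring]
    linear_combination (y1 * y2 * y3 * t1 * t2 * t3) * (I * hs - τ * I_sq)
  have hT : ∀ τ : ℂ, 0 < τ.im → ∀ z : ℂ,
      thetaQuark a b (mob ModularGroup.T τ) (z / jj ModularGroup.T τ)
        = v ModularGroup.T * jj ModularGroup.T τ
          * Complex.exp (2 * (π : ℂ) * I * ((a ^ 2 + a * b + b ^ 2 : ℤ) : ℂ)
              * (ModularGroup.T.1 1 0 : ℂ) * z ^ 2 / jj ModularGroup.T τ)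
          * thetaQuark a b τ z := by
    have hj : ∀ τ, jj ModularGroup.T τ = 1 := by intro τ; simp [jj, ModularGroup.T]
    have hm : ∀ τ, mob ModularGroup.T τ = τ + 1 := by
      intro τ; rw [mob, hj]; simp [ModularGroup.T]
    have hc : (ModularGroup.T.1 1 0 : ℂ) = 0 := by simp [ModularGroup.T]
    have hvT : v ModularGroup.T = ee (1 / 24) ^ 8 := by
      have h := hv ModularGroup.T I hIim
      rw [hm, hj, eta_T, mul_pow, one_pow, mul_one] at h
      exact (mul_right_cancel₀ (pow_ne_zero 8 (eta_ne hIim)) h).symm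
    intro τ hτ z
    rw [hm, hj, hvT, hc]
    have h8 : ee (1 / 8) = ee (1 / 24) ^ 3 := by rw [ee_pow]; congr 1; norm_num
    simp only [mul_zero, zero_mul, zero_div, Complex.exp_zero, mul_one, div_one]
    have hη := eta_ne hτ
    have hee := ee_ne (1 / 24)
    rw [thetaQuark, thetaQuark, jtheta_T, jtheta_T, jtheta_T, eta_T, h8]
    field_simp
  have h1 : ∀ τ : ℂ, 0 < τ.im → ∀ z : ℂ,
      thetaQuark a b (mob 1 τ) (z / jj 1 τ)
        = v 1 * jj 1 τ
          * Complex.exp (2 * (π : ℂ) * I * ((a ^ 2 + a * b + b ^ 2 : ℤ) : ℂ)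
              * ((1 : SL2Z).1 1 0 : ℂ) * z ^ 2 / jj 1 τ)
          * thetaQuark a b τ z := by
    have hj : ∀ τ, jj 1 τ = 1 := by intro τ; simp [jj]
    have hm : ∀ τ, mob 1 τ = τ := by intro τ; rw [mob, hj]; simp
    have hv1 : v 1 = 1 := by
      have h := hv 1 I hIim
      rw [hm, hj, one_pow, mul_one] at h
      apply mul_right_cancel₀ (pow_ne_zero 8 (eta_ne hIim))
      rw [one_mul]; exact h.symm
    intro τ hτ z
    rw [hm, hj, hv1]
    simp
  induction A using (FixedDetMatrices.induction_on one_ne_zero) with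
  | h0 A a1 a4 _ a6 =>
    rw [FixedDetMatrices.reps_one_id A a1 a4 a6]
    exact h1
  | hS B hb => exact hmul ModularGroup.S B hS hb
  | hT B hb => exact hmul ModularGroup.T B hT hb

/-- For positive integers `a, b` and `m = a²+ab+b²`, the theta-quark
`θ_{a,b}` is a holomorphic Jacobi form of weight `1` and index `m` in the sense of
Eichler–Zagier, with character `v_η^8`; it is a cusp form whenever `a ≢ b (mod 3)`. -/
theorem statement17 (a b : ℤ) (ha : 0 < a) (hb : 0 < b)
    (vη8 : SL2Z → ℂ)
    (hvη8 : ∀ A : SL2Z, ∀ τ : ℂ, 0 < τ.im →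
      dedekindEta (((A.1 0 0 : ℂ) * τ + (A.1 0 1 : ℂ)) / ((A.1 1 0 : ℂ) * τ + (A.1 1 1 : ℂ))) ^ 8
        = vη8 A * ((A.1 1 0 : ℂ) * τ + (A.1 1 1 : ℂ)) ^ 4 * dedekindEta τ ^ 8) :
    (∀ A : SL2Z, ∀ τ : ℂ, 0 < τ.im → ∀ z : ℂ,
      thetaQuark a b (((A.1 0 0 : ℂ) * τ + (A.1 0 1 : ℂ)) / ((A.1 1 0 : ℂ) * τ + (A.1 1 1 : ℂ)))
          (z / ((A.1 1 0 : ℂ) * τ + (A.1 1 1 : ℂ)))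
        = vη8 A * ((A.1 1 0 : ℂ) * τ + (A.1 1 1 : ℂ))
          * Complex.exp (2 * (π : ℂ) * I * ((a ^ 2 + a * b + b ^ 2 : ℤ) : ℂ) * (A.1 1 0 : ℂ)
              * z ^ 2 / ((A.1 1 0 : ℂ) * τ + (A.1 1 1 : ℂ)))
          * thetaQuark a b τ z) ∧
    (∀ lam mu : ℤ, ∀ τ : ℂ, 0 < τ.im → ∀ z : ℂ,
      thetaQuark a b τ (z + (lam : ℂ) * τ + (mu : ℂ))
        = Complex.exp (-(2 * (π : ℂ) * I * ((a ^ 2 + a * b + b ^ 2 : ℤ) : ℂ))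
            * ((lam : ℂ) ^ 2 * τ + 2 * (lam : ℂ) * z))
          * thetaQuark a b τ z) ∧
    DifferentiableOn ℂ (fun p : ℂ × ℂ => thetaQuark a b p.1 p.2) {p | 0 < p.1.im} ∧
    ∃ c : ℚ × ℚ → ℂ,
      (∀ p, c p ≠ 0 →
        0 ≤ p.1 ∧ (∃ j : ℤ, 2 * p.2 = (j : ℚ)) ∧
        0 ≤ 4 * p.1 * ((a ^ 2 + a * b + b ^ 2 : ℤ) : ℚ) - p.2 ^ 2) ∧
      (∀ τ : ℂ, 0 < τ.im → ∀ z : ℂ,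
        HasSum (fun p : ℚ × ℚ =>
            c p * Complex.exp (2 * (π : ℂ) * I * ((p.1 : ℂ) * τ + (p.2 : ℂ) * z)))
          (thetaQuark a b τ z)) ∧
      (¬ a ≡ b [ZMOD 3] → ∀ p, c p ≠ 0 →
        0 < 4 * p.1 * ((a ^ 2 + a * b + b ^ 2 : ℤ) : ℚ) - p.2 ^ 2) := by
  exact ⟨fun A τ hτ z => quark_modular a b vη8 hvη8 A τ hτ z,
    fun lam mu τ _ z => quark_elliptic a b lam mu τ z, quark_diff a b, quark_fourier a b⟩
end
end

section
/- For every even integer n ≥ 6 there exist an even positive definite lattice L of rank n (i.e. a symmetric positive definite integer Gram matrix S of size n with even diagonal entries) and a holomorphic Jacobi form φ of singular weight n/2 and index 1 for L with completely trivial character (trivial SL₂(ℤ)-character and trivial Heisenberg character) which is not identically zero. -/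
open Complex Matrix
open scoped Real BigOperators Classical

noncomputable section

theorem hs_congr {β : Type*} {f g : β → ℂ} {a : ℂ} (h : ∀ k, f k = g k) (hf : HasSum f a) :
    HasSum g a := by
  have : f = g := funext h
  exact this ▸ hf

/-- The exponential attached to the dual vector with integer coordinates `l`. -/
def jterm {n : ℕ} (N : Fin n → ℕ) (τ : ℂ) (z : Fin n → ℂ) (l : Fin n → ℤ) : ℂ :=
  Complex.exp (2 * (π : ℂ) * I * ∑ i, ((l i : ℂ) ^ 2 * τ / (2 * (N i : ℂ)) + (l i : ℂ) * z i))

/-- Theta-like series with periodic coefficients. -/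
structure PB {n : ℕ} (N : Fin n → ℕ) (e : ℂ) (c : (Fin n → ℤ) → ℂ)
    (φ : ℂ → (Fin n → ℂ) → ℂ) : Prop where
  hsum : ∀ τ : ℂ, 0 < τ.im → ∀ z, HasSum (fun l => c l * jterm N τ z l) (φ τ z)
  per : ∀ l x : Fin n → ℤ, c (fun i => l i + (N i : ℤ) * x i) = c l
  tcond : ∀ l, c l ≠ 0 →
    Complex.exp (2 * (π : ℂ) * I * ∑ i, ((l i : ℂ) ^ 2 / (2 * (N i : ℂ)))) = e
  holo : DifferentiableOn ℂ (fun p : ℂ × (Fin n → ℂ) => φ p.1 p.2) {p | 0 < p.1.im}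

theorem PB.add {n : ℕ} {N : Fin n → ℕ} {e : ℂ} {c d : (Fin n → ℤ) → ℂ}
    {φ ψ : ℂ → (Fin n → ℂ) → ℂ} (h : PB N e c φ) (h' : PB N e d ψ) :
    PB N e (fun l => c l + d l) (fun τ z => φ τ z + ψ τ z) where
  hsum τ hτ z := by
    simpa only [add_mul] using (h.hsum τ hτ z).add (h'.hsum τ hτ z)
  per l x := by simp only [h.per, h'.per]
  tcond l hl := by
    by_cases hc : c l = 0
    · exact h'.tcond l (by simpa [hc] using hl)
    · exact h.tcond l hc
  holo := h.holo.add h'.holo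

theorem PB.sub {n : ℕ} {N : Fin n → ℕ} {e : ℂ} {c d : (Fin n → ℤ) → ℂ}
    {φ ψ : ℂ → (Fin n → ℂ) → ℂ} (h : PB N e c φ) (h' : PB N e d ψ) :
    PB N e (fun l => c l - d l) (fun τ z => φ τ z - ψ τ z) where
  hsum τ hτ z := by
    simpa only [sub_mul] using (h.hsum τ hτ z).sub (h'.hsum τ hτ z)
  per l x := by simp only [h.per, h'.per]
  tcond l hl := by
    by_cases hc : c l = 0
    · exact h'.tcond l (by simpa [hc] using hl)
    · exact h.tcond l hc
  holo := h.holo.sub h'.holo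

theorem hs_mul {α β : Type*} {f : α → ℂ} {g : β → ℂ} {a b : ℂ} (hf : HasSum f a)
    (hg : HasSum g b) : HasSum (fun p : α × β => f p.1 * g p.2) (a * b) := by
  have hs : Summable (fun p : α × β => f p.1 * g p.2) :=
    summable_mul_of_summable_norm hf.summable.norm hg.summable.norm
  exact HasSum.mul hf hg hs

theorem holo_pull {m n : ℕ} (g : Fin m → Fin n) {φ : ℂ → (Fin m → ℂ) → ℂ}
    (h : DifferentiableOn ℂ (fun p : ℂ × (Fin m → ℂ) => φ p.1 p.2) {p | 0 < p.1.im}) :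
    DifferentiableOn ℂ (fun p : ℂ × (Fin n → ℂ) => φ p.1 (fun i => p.2 (g i)))
      {p | 0 < p.1.im} := by
  have hf : DifferentiableOn ℂ (fun p : ℂ × (Fin n → ℂ) =>
      ((p.1, fun i => p.2 (g i)) : ℂ × (Fin m → ℂ))) {p | 0 < p.1.im} := by
    apply Differentiable.differentiableOn
    fun_prop
  exact h.comp hf (fun p hp => hp)

theorem PB.mul {m n : ℕ} {M : Fin m → ℕ} {N : Fin n → ℕ} {e e' : ℂ} {c : (Fin m → ℤ) → ℂ}
    {d : (Fin n → ℤ) → ℂ}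
    {φ : ℂ → (Fin m → ℂ) → ℂ} {ψ : ℂ → (Fin n → ℂ) → ℂ} (h : PB M e c φ) (h' : PB N e' d ψ) :
    PB (Fin.append M N) (e * e')
      (fun l => c (fun i => l (Fin.castAdd n i)) * d (fun i => l (Fin.natAdd m i)))
      (fun τ z => φ τ (fun i => z (Fin.castAdd n i)) * ψ τ (fun i => z (Fin.natAdd m i))) := by
  refine ⟨fun τ hτ z => ?_, fun l x => ?_, fun l hl => ?_, ?_⟩
  ·
    have h1 := h.hsum τ hτ (fun i => z (Fin.castAdd n i))
    have h2 := h'.hsum τ hτ (fun i => z (Fin.natAdd m i))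
    have h3 := hs_mul h1 h2
    rw [← (Fin.appendEquiv m n).hasSum_iff]
    refine hs_congr ?_ h3
    rintro ⟨a, b⟩
    simp only [Function.comp, Fin.appendEquiv, Equiv.coe_fn_mk, Fin.append_left, Fin.append_right]
    have : jterm (Fin.append M N) τ z (Fin.append a b) =
        jterm M τ (fun i => z (Fin.castAdd n i)) a * jterm N τ (fun i => z (Fin.natAdd m i)) b := by
      unfold jterm
      rw [← Complex.exp_add, Fin.sum_univ_add]
      simp only [Fin.append_left, Fin.append_right, mul_add]
    rw [this]
    ring
  ·
    have h1 := h.per (fun i => l (Fin.castAdd n i)) (fun i => x (Fin.castAdd n i))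
    have h2 := h'.per (fun i => l (Fin.natAdd m i)) (fun i => x (Fin.natAdd m i))
    simp only [Fin.append_left, Fin.append_right, h1, h2]
  ·
    rw [← h.tcond _ (left_ne_zero_of_mul hl), ← h'.tcond _ (right_ne_zero_of_mul hl),
      ← Complex.exp_add, Fin.sum_univ_add]
    simp only [Fin.append_left, Fin.append_right, mul_add]
  ·
    have d1 : DifferentiableOn ℂ (fun p : ℂ × (Fin (m + n) → ℂ) =>
        φ p.1 (fun i => p.2 (Fin.castAdd n i))) {p | 0 < p.1.im} :=
      holo_pull (fun i => Fin.castAdd n i) h.holo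
    have d2 : DifferentiableOn ℂ (fun p : ℂ × (Fin (m + n) → ℂ) =>
        ψ p.1 (fun i => p.2 (Fin.natAdd m i))) {p | 0 < p.1.im} :=
      holo_pull (fun i => Fin.natAdd m i) h'.holo
    exact d1.mul d2

/-- One-dimensional theta function of residue class `r` modulo `N`. -/
def thet (N : ℕ) (r : ℤ) (τ z : ℂ) : ℂ :=
  Complex.exp (2 * (π : ℂ) * I * ((r : ℂ) ^ 2 * τ / (2 * (N : ℂ)) + (r : ℂ) * z)) *
    jacobiTheta₂ ((r : ℂ) * τ + (N : ℂ) * z) ((N : ℂ) * τ)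

/-- Indicator of a residue class. -/
def ind (N : ℕ) (r k : ℤ) : ℂ := if (N : ℤ) ∣ k - r then 1 else 0

theorem thet_hasSum (N : ℕ) (hN : 0 < N) (r : ℤ) (τ : ℂ) (hτ : 0 < τ.im) (z : ℂ) :
    HasSum (fun k : ℤ => ind N r k *
      Complex.exp (2 * (π : ℂ) * I * ((k : ℂ) ^ 2 * τ / (2 * (N : ℂ)) + (k : ℂ) * z)))
      (thet N r τ z) := by
  have hN' : (N : ℂ) ≠ 0 := by exact_mod_cast hN.ne'
  have hNz : (N : ℤ) ≠ 0 := by exact_mod_cast hN.ne'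
  have him : 0 < ((N : ℂ) * τ).im := by
    have : ((N : ℂ) * τ).im = N * τ.im := by simp
    rw [this]; positivity
  have h := (hasSum_jacobiTheta₂_term ((r : ℂ) * τ + (N : ℂ) * z) him).mul_left
    (Complex.exp (2 * (π : ℂ) * I * ((r : ℂ) ^ 2 * τ / (2 * (N : ℂ)) + (r : ℂ) * z)))
  have hinj : Function.Injective (fun k : ℤ => (N : ℤ) * k + r) := by
    intro a b hab
    have h1 : (N : ℤ) * a = N * b := by simpa using hab
    exact mul_left_cancel₀ hNz h1
  rw [← hinj.hasSum_iff]
  · unfold thet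
    refine hs_congr ?_ h
    intro k
    have : ind N r ((N : ℤ) * k + r) = 1 := by simp [ind]
    simp only [Function.comp, this, one_mul]
    rw [jacobiTheta₂_term, ← Complex.exp_add]
    congr 1
    push_cast
    field_simp
    ring
  · intro k hk
    have : ind N r k = 0 := by
      unfold ind
      rw [if_neg]
      rintro ⟨a, ha⟩
      exact hk ⟨a, by simp only; linarith⟩
    simp [this]

theorem thet_full (N : ℕ) (hN : 0 < N) (r : ℤ) (τ : ℂ) (hτ : 0 < τ.im) (z : ℂ) :
    jacobiTheta₂ (z - r / N) (τ / N) =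
      ∑ s ∈ Finset.range N, Complex.exp (-(2 * (π : ℂ) * I * r * s / N)) * thet N s τ z := by
  have hN' : (N : ℂ) ≠ 0 := by exact_mod_cast hN.ne'
  have him : 0 < (τ / (N : ℂ)).im := by
    have : (τ / (N : ℂ)).im = τ.im / N := by simp
    rw [this]; positivity
  have h1 := hasSum_jacobiTheta₂_term (z - r / N) him
  have h2 := hasSum_sum (s := Finset.range N) fun (s : ℕ) _ =>
    (thet_hasSum N hN s τ hτ z).mul_left (Complex.exp (-(2 * (π : ℂ) * I * r * s / N)))
  refine h1.unique (hs_congr ?_ h2)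
  intro k
  obtain ⟨s0, hs0, q, hq⟩ : ∃ s0 : ℕ, s0 < N ∧ ∃ q : ℤ, k = N * q + s0 := by
    have hNz : (0 : ℤ) < N := by exact_mod_cast hN
    refine ⟨(k % N).toNat, ?_, k / N, ?_⟩
    · have := Int.emod_lt_of_pos k hNz
      have := Int.emod_nonneg k hNz.ne'
      omega
    · have := Int.emod_nonneg k hNz.ne'
      rw [Int.toNat_of_nonneg this]
      exact (Int.mul_ediv_add_emod k N).symm
  rw [Finset.sum_eq_single s0]
  · have : ind N s0 k = 1 := by simp [ind, hq]
    rw [this, one_mul, jacobiTheta₂_term, ← Complex.exp_add, Complex.exp_eq_exp_iff_exists_int]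
    refine ⟨r * q, ?_⟩
    rw [hq]
    push_cast
    field_simp
    ring
  · intro b hb hne
    have : ind N b k = 0 := by
      unfold ind
      rw [if_neg]
      rintro ⟨a, ha⟩
      apply hne
      have hb' := Finset.mem_range.mp hb
      have h3 : (N : ℤ) ∣ (b : ℤ) - s0 := ⟨q - a, by rw [mul_sub]; linarith⟩
      have := Int.eq_zero_of_abs_lt_dvd h3 (by rw [abs_lt]; constructor <;> omega)
      omega
    simp [this]
  · intro h; exact absurd (Finset.mem_range.mpr hs0) h

theorem thet_S (N : ℕ) (hN : 0 < N) (r : ℤ) (τ : ℂ) (hτ : 0 < τ.im) (z : ℂ) :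
    thet N r (-1 / τ) (z / τ) = (-I * (τ / N)) ^ (1 / 2 : ℂ) *
      Complex.exp (π * I * N * z ^ 2 / τ) *
      ∑ s ∈ Finset.range N, Complex.exp (-(2 * (π : ℂ) * I * r * s / N)) * thet N s τ z := by
  have hN' : (N : ℂ) ≠ 0 := by exact_mod_cast hN.ne'
  have hτ0 : τ ≠ 0 := by rintro rfl; simp at hτ
  rw [← thet_full N hN r τ hτ z, jacobiTheta₂_functional_equation, thet]
  have e1 : (z - r / N) / (τ / N) = (r : ℂ) * (-1 / τ) + N * (z / τ) := by field_simp; ring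
  have e2 : -1 / (τ / N) = (N : ℂ) * (-1 / τ) := by field_simp
  rw [e1, e2]
  have hk : (-I * (τ / N)) ^ (1 / 2 : ℂ) ≠ 0 := by
    rw [Complex.cpow_ne_zero_iff]; left
    simp [hτ0, hN']
  have : Complex.exp (2 * (π : ℂ) * I * ((r : ℂ) ^ 2 * (-1 / τ) / (2 * (N : ℂ)) + (r : ℂ) * (z / τ)))
     = Complex.exp (π * I * N * z ^ 2 / τ) * Complex.exp (-π * I * (z - r / N) ^ 2 / (τ / N)) := by
    rw [← Complex.exp_add]
    congr 1
    field_simp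
    ring
  rw [this]
  generalize (-I * (τ / N)) ^ (1 / 2 : ℂ) = K at hk ⊢
  field_simp

theorem PB.thet (N : ℕ) (hN : 0 < N) (hev : Even N) (r : ℤ) :
    PB (fun _ : Fin 1 => N) (Complex.exp (2 * (π : ℂ) * I * ((r : ℂ) ^ 2 / (2 * (N : ℂ)))))
      (fun l => ind N r (l 0)) (fun τ z => thet N r τ (z 0)) where
  hsum τ hτ z := by
    have h := thet_hasSum N hN r τ hτ (z 0)
    rw [← (Equiv.funUnique (Fin 1) ℤ).hasSum_iff] at h
    refine hs_congr ?_ h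
    intro l
    simp [jterm, Equiv.funUnique]
  per l x := by
    simp only [ind]
    congr 1
    rw [show l 0 + N * x 0 - r = l 0 - r + N * x 0 by ring]
    simp
  tcond l hl := by
    have hN' : (N : ℂ) ≠ 0 := by exact_mod_cast hN.ne'
    have hd : (N : ℤ) ∣ l 0 - r := by
      by_contra h
      simp [ind, h] at hl
    obtain ⟨q, hq⟩ := hd
    obtain ⟨M, hM⟩ := hev
    have hl : l 0 = N * q + r := by linarith
    rw [Complex.exp_eq_exp_iff_exists_int]
    refine ⟨r * q + M * q ^ 2, ?_⟩
    simp only [Fin.sum_univ_one, hl]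
    have hM' : (M : ℂ) = N / 2 := by rw [hM]; push_cast; ring
    push_cast
    rw [hM']
    field_simp
    ring
  holo := by
    intro p hp
    have him : 0 < ((N : ℂ) * p.1).im := by
      have : ((N : ℂ) * p.1).im = N * p.1.im := by simp
      rw [this]; have : 0 < p.1.im := hp; positivity
    apply DifferentiableAt.differentiableWithinAt
    apply DifferentiableAt.mul
    · fun_prop
    · have h := (hasFDerivAt_jacobiTheta₂ ((r : ℂ) * p.1 + (N : ℂ) * p.2 0) him).differentiableAt
      exact h.comp p (f := fun p : ℂ × (Fin 1 → ℂ) =>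
        ((r : ℂ) * p.1 + (N : ℂ) * p.2 0, (N : ℂ) * p.1)) (by fun_prop)

/-- Transformation law under `τ ↦ -1/τ`. -/
def SLaw {n : ℕ} (N : Fin n → ℕ) (k : ℕ) (φ : ℂ → (Fin n → ℂ) → ℂ) : Prop :=
  ∀ τ : ℂ, 0 < τ.im → ∀ z : Fin n → ℂ, φ (-1 / τ) (fun i => z i / τ) =
    τ ^ k * Complex.exp ((π : ℂ) * I * (∑ i, (N i : ℂ) * z i ^ 2) / τ) * φ τ z

theorem SLaw.mul {m n : ℕ} {M : Fin m → ℕ} {N : Fin n → ℕ} {k k' : ℕ}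
    {φ : ℂ → (Fin m → ℂ) → ℂ} {ψ : ℂ → (Fin n → ℂ) → ℂ} (h : SLaw M k φ) (h' : SLaw N k' ψ) :
    SLaw (Fin.append M N) (k + k')
      (fun τ z => φ τ (fun i => z (Fin.castAdd n i)) * ψ τ (fun i => z (Fin.natAdd m i))) := by
  intro τ hτ z
  have h1 := h τ hτ (fun i => z (Fin.castAdd n i))
  have h2 := h' τ hτ (fun i => z (Fin.natAdd m i))
  simp only at h1 h2 ⊢
  rw [h1, h2, Fin.sum_univ_add]
  simp only [Fin.append_left, Fin.append_right, mul_add, add_div, Complex.exp_add, pow_add]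
  ring

/-- The rank two diagonal lattice. -/
def M2 : Fin (1 + 1) → ℕ := Fin.append (fun _ : Fin 1 => 2) (fun _ : Fin 1 => 6)

theorem pbUV (a b : ℤ) (e : ℂ)
    (he : Complex.exp (2 * (π : ℂ) * I * ((a : ℂ) ^ 2 / 4 + (b : ℂ) ^ 2 / 12)) = e) :
    PB M2 e (fun l => ind 2 a (l 0) * ind 6 b (l 1))
      (fun τ z => thet 2 a τ (z 0) * thet 6 b τ (z 1)) := by
  have h := (PB.thet 2 (by norm_num) (by decide) a).mul (PB.thet 6 (by norm_num) (by decide) b)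
  rw [← Complex.exp_add] at h
  have h2 : Complex.exp (2 * (π : ℂ) * I * ((a : ℂ) ^ 2 / (2 * ((2 : ℕ) : ℂ))) +
      2 * (π : ℂ) * I * ((b : ℂ) ^ 2 / (2 * ((6 : ℕ) : ℂ)))) = e := by
    rw [← he]; congr 1; push_cast; ring
  rw [h2] at h
  exact h

/-- The cube root of unity. -/
def om : ℂ := Complex.exp (2 * (π : ℂ) * I * (1 / 3))

theorem om_cube : om ^ 3 = 1 := by
  rw [om, ← Complex.exp_nat_mul, Complex.exp_eq_one_iff]
  exact ⟨1, by push_cast; ring⟩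

theorem om_of (q : ℂ) (k : ℤ) (h : q = 1 / 3 + k) : Complex.exp (2 * (π : ℂ) * I * q) = om := by
  rw [om, Complex.exp_eq_exp_iff_exists_int]
  exact ⟨k, by rw [h]; ring⟩

def cA (l : Fin (1 + 1) → ℤ) : ℂ := ind 2 0 (l 0) * ind 6 0 (l 1) + ind 2 1 (l 0) * ind 6 3 (l 1)
def fA (τ : ℂ) (z : Fin (1 + 1) → ℂ) : ℂ :=
  thet 2 0 τ (z 0) * thet 6 0 τ (z 1) + thet 2 1 τ (z 0) * thet 6 3 τ (z 1)
def cB (l : Fin (1 + 1) → ℤ) : ℂ :=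
  (ind 2 0 (l 0) * ind 6 4 (l 1) + ind 2 0 (l 0) * ind 6 2 (l 1)) +
  (ind 2 1 (l 0) * ind 6 1 (l 1) + ind 2 1 (l 0) * ind 6 5 (l 1))
def fB (τ : ℂ) (z : Fin (1 + 1) → ℂ) : ℂ :=
  (thet 2 0 τ (z 0) * thet 6 4 τ (z 1) + thet 2 0 τ (z 0) * thet 6 2 τ (z 1)) +
  (thet 2 1 τ (z 0) * thet 6 1 τ (z 1) + thet 2 1 τ (z 0) * thet 6 5 τ (z 1))
def cC (l : Fin (1 + 1) → ℤ) : ℂ :=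
  (ind 2 0 (l 0) * ind 6 4 (l 1) - ind 2 0 (l 0) * ind 6 2 (l 1)) +
  (ind 2 1 (l 0) * ind 6 1 (l 1) - ind 2 1 (l 0) * ind 6 5 (l 1))
def fC (τ : ℂ) (z : Fin (1 + 1) → ℂ) : ℂ :=
  (thet 2 0 τ (z 0) * thet 6 4 τ (z 1) - thet 2 0 τ (z 0) * thet 6 2 τ (z 1)) +
  (thet 2 1 τ (z 0) * thet 6 1 τ (z 1) - thet 2 1 τ (z 0) * thet 6 5 τ (z 1))

theorem pbA : PB M2 1 cA fA := by
  refine (pbUV 0 0 1 ?_).add (pbUV 1 3 1 ?_)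
  · simp
  · rw [Complex.exp_eq_one_iff]; exact ⟨1, by push_cast; ring⟩

theorem pbB : PB M2 om cB fB := by
  refine ((pbUV 0 4 om ?_).add (pbUV 0 2 om ?_)).add ((pbUV 1 1 om ?_).add (pbUV 1 5 om ?_))
  · exact om_of _ 1 (by push_cast; norm_num)
  · exact om_of _ 0 (by push_cast; norm_num)
  · exact om_of _ 0 (by push_cast; norm_num)
  · exact om_of _ 2 (by push_cast; norm_num)

theorem pbC : PB M2 om cC fC := by
  refine ((pbUV 0 4 om ?_).sub (pbUV 0 2 om ?_)).add ((pbUV 1 1 om ?_).sub (pbUV 1 5 om ?_))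
  · exact om_of _ 1 (by push_cast; norm_num)
  · exact om_of _ 0 (by push_cast; norm_num)
  · exact om_of _ 0 (by push_cast; norm_num)
  · exact om_of _ 2 (by push_cast; norm_num)

/-- A primitive sixth root of unity. -/
def ze : ℂ := Complex.exp (-(2 * (π : ℂ) * I / 6))

theorem ze_val : ze = 1 / 2 - (Real.sqrt 3 : ℂ) / 2 * I := by
  have : -(2 * (π : ℂ) * I / 6) = ((-(π / 3) : ℝ) : ℂ) * I := by push_cast; ring
  rw [ze, this, Complex.exp_mul_I, ← Complex.ofReal_cos, ← Complex.ofReal_sin, Real.cos_neg,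
    Real.sin_neg, Real.cos_pi_div_three, Real.sin_pi_div_three]
  push_cast
  ring

theorem s3 : (Real.sqrt 3 : ℂ) ^ 2 = 3 := by
  rw [← Complex.ofReal_pow, Real.sq_sqrt (by norm_num)]; norm_num

theorem ze2 : ze ^ 2 = ze - 1 := by
  rw [ze_val]
  linear_combination (1 / 4 : ℂ) * I ^ 2 * s3 + (3 / 4 : ℂ) * Complex.I_sq

theorem ze3 : ze ^ 3 = -1 := by linear_combination (ze + 1) * ze2

theorem thet_S2 (r : ℕ) (τ : ℂ) (hτ : 0 < τ.im) (z : ℂ) :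
    thet 2 r (-1 / τ) (z / τ) = (-I * (τ / 2)) ^ (1 / 2 : ℂ) *
      Complex.exp (π * I * 2 * z ^ 2 / τ) * (thet 2 0 τ z + (-1) ^ r * thet 2 1 τ z) := by
  have h := thet_S 2 (by norm_num) r τ hτ z
  simp only [Finset.sum_range_succ, Finset.sum_range_zero] at h
  have : Complex.exp (-(2 * (π : ℂ) * I * r * 1 / 2)) = (-1) ^ r := by
    rw [← Complex.exp_pi_mul_I, ← Complex.exp_nat_mul, Complex.exp_eq_exp_iff_exists_int]
    exact ⟨-r, by push_cast; ring⟩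
  push_cast at h
  rw [this] at h
  simpa using h

theorem thet_S6 (r : ℕ) (τ : ℂ) (hτ : 0 < τ.im) (z : ℂ) :
    thet 6 r (-1 / τ) (z / τ) = (-I * (τ / 6)) ^ (1 / 2 : ℂ) *
      Complex.exp (π * I * 6 * z ^ 2 / τ) * (thet 6 0 τ z + ze ^ r * thet 6 1 τ z +
        ze ^ (r * 2) * thet 6 2 τ z + ze ^ (r * 3) * thet 6 3 τ z + ze ^ (r * 4) * thet 6 4 τ z
        + ze ^ (r * 5) * thet 6 5 τ z) := by
  have h := thet_S 6 (by norm_num) r τ hτ z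
  have key : ∀ s : ℕ, Complex.exp (-(2 * (π : ℂ) * I * (r : ℤ) * s / (6 : ℕ))) = ze ^ (r * s) := by
    intro s
    rw [ze, ← Complex.exp_nat_mul]
    congr 1
    push_cast
    ring
  simp only [key] at h
  simp only [Finset.sum_range_succ, Finset.sum_range_zero] at h
  push_cast at h
  simpa using h

theorem cpow_prod (τ : ℂ) (hτ : 0 < τ.im) :
    (-I * (τ / 2)) ^ (1 / 2 : ℂ) * (-I * (τ / 6)) ^ (1 / 2 : ℂ) * (2 * (Real.sqrt 3 : ℂ)) =
      -I * τ := by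
  have hτ0 : τ ≠ 0 := by rintro rfl; simp at hτ
  have hw : -I * (τ / 2) ≠ 0 := by simp [hτ0]
  have e1 : -I * (τ / 6) = ((1 / 3 : ℝ) : ℂ) * (-I * (τ / 2)) := by push_cast; ring
  have e2 : (-I * (τ / 6)) ^ (1 / 2 : ℂ) =
      (Real.sqrt (1 / 3) : ℂ) * (-I * (τ / 2)) ^ (1 / 2 : ℂ) := by
    rw [e1, Real.sqrt_eq_rpow, Complex.ofReal_cpow (by norm_num),
      Complex.cpow_def_of_ne_zero (mul_ne_zero (by norm_num) hw),
      Complex.cpow_def_of_ne_zero (by norm_num), Complex.cpow_def_of_ne_zero hw,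
      Complex.log_ofReal_mul (by norm_num) hw, ← Complex.exp_add, Complex.ofReal_log (by norm_num)]
    congr 1
    push_cast
    ring
  have e3 : ((-I * (τ / 2)) ^ (1 / 2 : ℂ)) ^ 2 = -I * (τ / 2) := by
    rw [← Complex.cpow_nat_mul]; norm_num
  have e4 : (Real.sqrt (1 / 3) : ℂ) * (Real.sqrt 3 : ℂ) = 1 := by
    rw [← Complex.ofReal_mul, ← Real.sqrt_mul (by norm_num)]; norm_num
  rw [e2]
  linear_combination (2 * (Real.sqrt (1 / 3) : ℂ) * (Real.sqrt 3 : ℂ)) * e3 +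
    2 * (-I * (τ / 2)) * e4

/-- The common factor. -/
def gfac (τ : ℂ) (z : Fin (1 + 1) → ℂ) : ℂ :=
  2 * ((-I * (τ / 2)) ^ (1 / 2 : ℂ) * Complex.exp (π * I * 2 * z 0 ^ 2 / τ)) *
  ((-I * (τ / 6)) ^ (1 / 2 : ℂ) * Complex.exp (π * I * 6 * z 1 ^ 2 / τ))

theorem gfac_eq (τ : ℂ) (hτ : 0 < τ.im) (z : Fin (1 + 1) → ℂ) :
    gfac τ z * (Real.sqrt 3 : ℂ) =
      -I * τ * Complex.exp ((π : ℂ) * I * (∑ i, (M2 i : ℂ) * z i ^ 2) / τ) := by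
  have h0 : M2 0 = 2 := rfl
  have h1 : M2 1 = 6 := rfl
  have : Complex.exp ((π : ℂ) * I * (∑ i, (M2 i : ℂ) * z i ^ 2) / τ) =
      Complex.exp (π * I * 2 * z 0 ^ 2 / τ) * Complex.exp (π * I * 6 * z 1 ^ 2 / τ) := by
    rw [← Complex.exp_add]
    have : ∑ i, (M2 i : ℂ) * z i ^ 2 = 2 * z 0 ^ 2 + 6 * z 1 ^ 2 := by
      rw [show (∑ i, (M2 i : ℂ) * z i ^ 2) = (M2 0 : ℂ) * z 0 ^ 2 + (M2 1 : ℂ) * z 1 ^ 2 from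
        Fin.sum_univ_two _, h0, h1]
      norm_num
    rw [this]
    congr 1
    ring
  rw [this, ← cpow_prod τ hτ, gfac]
  ring

theorem fABC_S (τ : ℂ) (hτ : 0 < τ.im) (z : Fin (1 + 1) → ℂ) :
    fA (-1 / τ) (fun i => z i / τ) = gfac τ z * (fA τ z + fB τ z) ∧
    fB (-1 / τ) (fun i => z i / τ) = gfac τ z * (2 * fA τ z - fB τ z) ∧
    fC (-1 / τ) (fun i => z i / τ) = gfac τ z * ((1 - 2 * ze) * fC τ z) := by
  have p0 := thet_S2 0 τ hτ (z 0)
  have p1 := thet_S2 1 τ hτ (z 0)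
  have q0 := thet_S6 0 τ hτ (z 1)
  have q1 := thet_S6 1 τ hτ (z 1)
  have q2 := thet_S6 2 τ hτ (z 1)
  have q3 := thet_S6 3 τ hτ (z 1)
  have q4 := thet_S6 4 τ hτ (z 1)
  have q5 := thet_S6 5 τ hτ (z 1)
  have h6 : ze ^ 6 = 1 := by linear_combination (ze ^ 3 - 1) * ze3
  have e4 : ze ^ 4 = -ze := by linear_combination ze * ze3
  have e5 : ze ^ 5 = 1 - ze := by linear_combination ze ^ 2 * ze3 - ze2
  have e8 : ze ^ 8 = ze - 1 := by linear_combination ze ^ 2 * h6 + ze2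
  have e9 : ze ^ 9 = -1 := by linear_combination ze ^ 3 * h6 + ze3
  have e10 : ze ^ 10 = -ze := by linear_combination ze ^ 4 * h6 + e4
  have e12 : ze ^ 12 = 1 := by linear_combination (ze ^ 6 + 1) * h6
  have e15 : ze ^ 15 = -1 := by linear_combination ze ^ 9 * h6 + e9
  have e16 : ze ^ 16 = -ze := by linear_combination ze ^ 10 * h6 + e10
  have e20 : ze ^ 20 = ze - 1 := by linear_combination (ze ^ 14 + ze ^ 8) * h6 + e8
  have e25 : ze ^ 25 = ze := by linear_combination (ze ^ 19 + ze ^ 13 + ze ^ 7 + ze) * h6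
  norm_num at p0 p1 q0 q1 q2 q3 q4 q5
  simp only [ze2, ze3, h6, e4, e5, e8, e9, e10, e12, e15, e16, e20, e25] at q0 q1 q2 q3 q4 q5
  unfold fA fB fC gfac
  norm_num
  simp only [p0, p1, q0, q1, q2, q3, q4, q5]
  refine ⟨?_, ?_, ?_⟩ <;> ring_nf

theorem slawC : SLaw M2 1 fC := by
  intro τ hτ z
  rw [(fABC_S τ hτ z).2.2]
  have h := gfac_eq τ hτ z
  have : 1 - 2 * ze = (Real.sqrt 3 : ℂ) * I := by rw [ze_val]; ring
  rw [this]
  linear_combination (I * fC τ z) * h - τ * Complex.exp ((π : ℂ) * I *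
    (∑ i, (M2 i : ℂ) * z i ^ 2) / τ) * fC τ z * Complex.I_sq

/-- The rank four block. -/
def cD (l : Fin (1 + 1 + (1 + 1)) → ℤ) : ℂ :=
  cA (fun i => l (Fin.castAdd _ i)) * cB (fun i => l (Fin.natAdd _ i)) -
  cB (fun i => l (Fin.castAdd _ i)) * cA (fun i => l (Fin.natAdd _ i))
def fD (τ : ℂ) (z : Fin (1 + 1 + (1 + 1)) → ℂ) : ℂ :=
  fA τ (fun i => z (Fin.castAdd _ i)) * fB τ (fun i => z (Fin.natAdd _ i)) -
  fB τ (fun i => z (Fin.castAdd _ i)) * fA τ (fun i => z (Fin.natAdd _ i))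

theorem pbD : PB (Fin.append M2 M2) om cD fD := by
  have h1 := pbA.mul pbB
  have h2 := pbB.mul pbA
  rw [one_mul] at h1
  rw [mul_one] at h2
  exact h1.sub h2

theorem slawD : SLaw (Fin.append M2 M2) 2 fD := by
  intro τ hτ z
  have a := fABC_S τ hτ (fun i => z (Fin.castAdd _ i))
  have b := fABC_S τ hτ (fun i => z (Fin.natAdd _ i))
  have ha := gfac_eq τ hτ (fun i => z (Fin.castAdd _ i))
  have hb := gfac_eq τ hτ (fun i => z (Fin.natAdd _ i))
  unfold fD
  rw [a.1, a.2.1, b.1, b.2.1, Fin.sum_univ_add]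
  simp only [Fin.append_left, Fin.append_right, mul_add, add_div, Complex.exp_add]
  generalize gfac τ (fun i => z (Fin.castAdd _ i)) = g1 at *
  generalize gfac τ (fun i => z (Fin.natAdd _ i)) = g2 at *
  generalize Complex.exp ((π : ℂ) * I * (∑ i, (M2 i : ℂ) * z (Fin.castAdd _ i) ^ 2) / τ) = E1 at *
  generalize Complex.exp ((π : ℂ) * I * (∑ i, (M2 i : ℂ) * z (Fin.natAdd _ i) ^ 2) / τ) = E2 at *
  have h3 : g1 * g2 * 3 = - (τ ^ 2 * E1 * E2) := by
    calc g1 * g2 * 3 = (g1 * (Real.sqrt 3 : ℂ)) * (g2 * (Real.sqrt 3 : ℂ)) := by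
          linear_combination (-g1 * g2) * s3
      _ = _ := by rw [ha, hb]; linear_combination (τ ^ 2 * E1 * E2) * Complex.I_sq
  generalize fA τ _ = A1
  generalize fB τ _ = B1
  generalize fA τ _ = A2
  generalize fB τ _ = B2
  linear_combination (-(A1 * B2 - B1 * A2)) * h3

theorem neC : ∃ l, cC l ≠ 0 := by
  refine ⟨![0, 2], ?_⟩
  simp [cC, ind]

theorem neD : ∃ l, cD l ≠ 0 := by
  refine ⟨![0, 0, 0, 2], ?_⟩
  simp [cD, cA, cB, ind, Fin.castAdd, Fin.natAdd, Fin.castLE]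

/-- Existence of a block of rank `n`, weight `k`, `T`-eigenvalue `e`. -/
def Ex (n k : ℕ) (e : ℂ) : Prop :=
  ∃ (N : Fin n → ℕ) (c : (Fin n → ℤ) → ℂ) (φ : ℂ → (Fin n → ℂ) → ℂ),
    PB N e c φ ∧ SLaw N k φ ∧ (∃ l, c l ≠ 0) ∧ ∀ i, 0 < N i ∧ Even (N i)

theorem M2_pos (i : Fin (1 + 1)) : 0 < M2 i ∧ Even (M2 i) := by
  refine Fin.addCases (fun j => ?_) (fun j => ?_) i
  · simp only [M2, Fin.append_left]; exact ⟨by norm_num, by decide⟩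
  · simp only [M2, Fin.append_right]; exact ⟨by norm_num, by decide⟩

theorem Ex.mul {m n k k' : ℕ} {e e' : ℂ} (h : Ex m k e) (h' : Ex n k' e') :
    Ex (m + n) (k + k') (e * e') := by
  obtain ⟨M, c, φ, h1, h2, ⟨l, h3⟩, h4⟩ := h
  obtain ⟨N, d, ψ, g1, g2, ⟨l', g3⟩, g4⟩ := h'
  refine ⟨_, _, _, h1.mul g1, h2.mul g2, ⟨Fin.append l l', ?_⟩, ?_⟩
  · simp only [Fin.append_left, Fin.append_right]
    exact mul_ne_zero h3 g3
  · intro i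
    refine Fin.addCases (fun j => ?_) (fun j => ?_) i
    · rw [Fin.append_left]; exact h4 j
    · rw [Fin.append_right]; exact g4 j

theorem ExC : Ex 2 1 om := ⟨_, _, _, pbC, slawC, neC, M2_pos⟩

theorem M4_pos (i : Fin (1 + 1 + (1 + 1))) :
    0 < Fin.append M2 M2 i ∧ Even (Fin.append M2 M2 i) := by
  refine Fin.addCases (fun j => ?_) (fun j => ?_) i
  · rw [Fin.append_left]; exact M2_pos j
  · rw [Fin.append_right]; exact M2_pos j

theorem ExD : Ex 4 2 om := ⟨_, _, _, pbD, slawD, neD, M4_pos⟩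

theorem Ex_all (m : ℕ) (hm : 3 ≤ m) : Ex (m + m) m 1 := by
  have ho : om * om * om = 1 := by rw [← om_cube]; ring
  have h3 : Ex 6 3 1 := ho ▸ (ExC.mul ExC).mul ExC
  have h4 : Ex 8 4 1 := ho ▸ (ExC.mul ExC).mul ExD
  have h5 : Ex 10 5 1 := ho ▸ (ExC.mul ExD).mul ExD
  induction m using Nat.strong_induction_on with
  | _ m ih =>
    by_cases h6 : m < 6
    · interval_cases m
      · exact h3
      · exact h4
      · exact h5
    · have h := (ih (m - 3) (by omega) (by omega)).mul h3
      have e1 : m - 3 + (m - 3) + 6 = m + m := by omega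
      have e2 : m - 3 + 3 = m := by omega
      rw [e1, e2, one_mul] at h
      exact h

attribute [local instance] instMeasureSpaceUnitAddCircle

theorem exists_coeff {n : ℕ} (m : Fin n → ℤ) : ∃ L : C(UnitAddTorus (Fin n), ℂ) →L[ℂ] ℂ,
    ∀ l, L (UnitAddTorus.mFourier l) = if m = l then 1 else 0 := by
  have : MeasureTheory.IsProbabilityMeasure (MeasureTheory.volume : MeasureTheory.Measure UnitAddCircle) :=
    inferInstanceAs (MeasureTheory.IsProbabilityMeasure AddCircle.haarAddCircle)
  refine ⟨(innerSL ℂ (UnitAddTorus.mFourierLp (d := Fin n) 2 m)).comp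
    (ContinuousMap.toLp 2 MeasureTheory.volume ℂ), fun l => ?_⟩
  exact orthonormal_iff_ite.mp (UnitAddTorus.orthonormal_mFourier (d := Fin n)) m l

theorem fourier_unique {n : ℕ} (a : (Fin n → ℤ) → ℂ) (ha : Summable a)
    (h : ∀ x : Fin n → ℝ, HasSum (fun l => a l *
      Complex.exp (2 * (π : ℂ) * I * ∑ i, (l i : ℂ) * (x i : ℂ))) 0) (m : Fin n → ℤ) : a m = 0 := by
  have hs : Summable (fun l : Fin n → ℤ => a l • (UnitAddTorus.mFourier l)) := by
    apply Summable.of_norm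
    simp only [norm_smul, UnitAddTorus.mFourier_norm, mul_one]
    exact ha.norm
  have h0 : (∑' l : Fin n → ℤ, a l • (UnitAddTorus.mFourier l)) = 0 := by
    ext t
    obtain ⟨x, hx⟩ : ∃ x : Fin n → ℝ, (fun i => ((x i : ℝ) : UnitAddCircle)) = t := by
      choose x hx using fun i => QuotientAddGroup.mk_surjective (t i)
      exact ⟨x, funext hx⟩
    have h1 := (ContinuousMap.hasSum_apply hs.hasSum t)
    refine h1.unique ?_
    refine hs_congr ?_ (h x)
    intro l
    rw [← hx]
    simp only [ContinuousMap.smul_apply, UnitAddTorus.mFourier, ContinuousMap.coe_mk, smul_eq_mul,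
      fourier_coe_apply]
    rw [← Complex.exp_sum]
    congr 2
    rw [Finset.mul_sum]
    refine Finset.sum_congr rfl fun i _ => ?_
    push_cast
    ring
  obtain ⟨L, hLm⟩ := exists_coeff m
  have hL := L.hasSum hs.hasSum
  rw [h0, map_zero] at hL
  have hL2 := hasSum_single (f := fun l : Fin n → ℤ => L (a l • (UnitAddTorus.mFourier l))) m ?_
  · have h3 := hL.unique hL2
    rw [map_smul, hLm, if_pos rfl, smul_eq_mul, mul_one] at h3
    exact h3.symm
  · intro l hl
    rw [map_smul, hLm, if_neg (Ne.symm hl), smul_zero]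

theorem PB.nonzero {n : ℕ} {N : Fin n → ℕ} {e : ℂ} {c : (Fin n → ℤ) → ℂ}
    {φ : ℂ → (Fin n → ℂ) → ℂ} (h : PB N e c φ) (hc : ∃ l, c l ≠ 0) :
    ∃ (τ : ℂ) (z : Fin n → ℂ), 0 < τ.im ∧ φ τ z ≠ 0 := by
  by_contra! hcon
  obtain ⟨l, hl⟩ := hc
  have hI : 0 < I.im := by simp
  have hJ : ∀ (z : Fin n → ℂ) (l : Fin n → ℤ), jterm N I z l =
      jterm N I 0 l * Complex.exp (2 * (π : ℂ) * I * ∑ i, (l i : ℂ) * z i) := by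
    intro z l
    unfold jterm
    rw [← Complex.exp_add]
    simp [Finset.sum_add_distrib, mul_add]
  have := fourier_unique (fun l => c l * jterm N I 0 l) (h.hsum I hI 0).summable (by
    intro x
    have h1 := h.hsum I hI (fun i => (x i : ℂ))
    rw [hcon I _ hI] at h1
    refine hs_congr ?_ h1
    intro l
    rw [hJ]
    ring) l
  exact (mul_ne_zero hl (Complex.exp_ne_zero _)) this

theorem PB.elliptic {n : ℕ} {N : Fin n → ℕ} {e : ℂ} {c : (Fin n → ℤ) → ℂ}
    {φ : ℂ → (Fin n → ℂ) → ℂ} (h : PB N e c φ) (hN : ∀ i, 0 < N i) (x y : Fin n → ℤ) (τ : ℂ)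
    (hτ : 0 < τ.im) (z : Fin n → ℂ) :
    φ τ (fun i => z i + (x i : ℂ) * τ + (y i : ℂ)) =
      Complex.exp (-((π : ℂ) * I) * ((∑ i, (N i : ℂ) * (x i : ℂ) ^ 2) * τ +
        2 * ∑ i, (N i : ℂ) * (x i : ℂ) * z i)) * φ τ z := by
  have h1 := (h.hsum τ hτ z).mul_left (Complex.exp (-((π : ℂ) * I) *
    ((∑ i, (N i : ℂ) * (x i : ℂ) ^ 2) * τ + 2 * ∑ i, (N i : ℂ) * (x i : ℂ) * z i)))
  rw [← (Equiv.addRight (fun i => (N i : ℤ) * x i)).hasSum_iff] at h1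
  refine (h.hsum τ hτ _).unique (hs_congr ?_ h1)
  intro l
  simp only [Function.comp, Equiv.coe_addRight]
  have hp : c (l + fun i => (N i : ℤ) * x i) = c l := h.per l x
  rw [hp, mul_left_comm]
  congr 1
  unfold jterm
  rw [← Complex.exp_add, Complex.exp_eq_exp_iff_exists_int]
  refine ⟨-∑ i, l i * y i, ?_⟩
  push_cast
  simp only [Pi.add_apply]
  simp only [Finset.mul_sum, Finset.sum_mul, ← Finset.sum_add_distrib, ← Finset.sum_neg_distrib]
  refine Finset.sum_congr rfl fun i _ => ?_
  have : (N i : ℂ) ≠ 0 := by exact_mod_cast (hN i).ne'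
  push_cast
  field_simp
  ring

theorem PB.T_inv {n : ℕ} {N : Fin n → ℕ} {c : (Fin n → ℤ) → ℂ}
    {φ : ℂ → (Fin n → ℂ) → ℂ} (h : PB N 1 c φ) (τ : ℂ)
    (hτ : 0 < τ.im) (z : Fin n → ℂ) : φ (τ + 1) z = φ τ z := by
  refine (h.hsum (τ + 1) (by simpa using hτ) z).unique (hs_congr ?_ (h.hsum τ hτ z))
  intro l
  by_cases hl : c l = 0
  · simp [hl]
  · have h1 := h.tcond l hl
    congr 1
    have h2 : jterm N (τ + 1) z l = jterm N τ z l *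
        Complex.exp (2 * (π : ℂ) * I * ∑ i, (l i : ℂ) ^ 2 / (2 * (N i : ℂ))) := by
      unfold jterm
      rw [← Complex.exp_add, ← mul_add, ← Finset.sum_add_distrib]
      congr 2
      refine Finset.sum_congr rfl fun i _ => ?_
      ring
    rw [h2, h1, mul_one]

/-- The modular transformation law for one matrix. -/
def MLaw {n : ℕ} (N : Fin n → ℕ) (k : ℕ) (φ : ℂ → (Fin n → ℂ) → ℂ) (A : SL2Z) : Prop :=
  ∀ τ : ℂ, 0 < τ.im → ∀ z : Fin n → ℂ,
    φ (((A.1 0 0 : ℂ) * τ + (A.1 0 1 : ℂ)) / ((A.1 1 0 : ℂ) * τ + (A.1 1 1 : ℂ)))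
        (fun i => z i / ((A.1 1 0 : ℂ) * τ + (A.1 1 1 : ℂ)))
      = ((A.1 1 0 : ℂ) * τ + (A.1 1 1 : ℂ)) ^ k
        * Complex.exp ((π : ℂ) * I * (A.1 1 0 : ℂ) * (∑ i, (N i : ℂ) * z i ^ 2)
            / ((A.1 1 0 : ℂ) * τ + (A.1 1 1 : ℂ)))
        * φ τ z

theorem sl_det (A : SL2Z) : (A.1 0 0 : ℂ) * (A.1 1 1 : ℂ) - (A.1 0 1 : ℂ) * (A.1 1 0 : ℂ) = 1 := by
  have := A.2
  rw [Matrix.det_fin_two] at this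
  exact_mod_cast this

theorem sl_denom (A : SL2Z) (τ : ℂ) (hτ : 0 < τ.im) : (A.1 1 0 : ℂ) * τ + (A.1 1 1 : ℂ) ≠ 0 := by
  intro h
  have hd := sl_det A
  have him := congrArg Complex.im h
  simp at him
  rcases him with h0 | h0
  · have h1 : (A.1 1 0 : ℂ) = 0 := by exact_mod_cast h0
    rw [h1] at h hd
    have h2 : (A.1 1 1 : ℂ) = 0 := by simpa using h
    rw [h2] at hd
    simp at hd
  · exact hτ.ne' h0

theorem sl_im (A : SL2Z) (τ : ℂ) (hτ : 0 < τ.im) :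
    0 < (((A.1 0 0 : ℂ) * τ + (A.1 0 1 : ℂ)) / ((A.1 1 0 : ℂ) * τ + (A.1 1 1 : ℂ))).im := by
  have h := (A • (⟨τ, hτ⟩ : UpperHalfPlane)).im_pos
  rw [← UpperHalfPlane.coe_im, UpperHalfPlane.coe_specialLinearGroup_apply] at h
  simpa using h

theorem MLaw.mul {n : ℕ} {N : Fin n → ℕ} {k : ℕ} {φ : ℂ → (Fin n → ℂ) → ℂ} {A B : SL2Z}
    (hA : MLaw N k φ A) (hB : MLaw N k φ B) : MLaw N k φ (A * B) := by
  intro τ hτ z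
  have h1 := hA _ (sl_im B τ hτ) (fun i => z i / ((B.1 1 0 : ℂ) * τ + (B.1 1 1 : ℂ)))
  rw [hB τ hτ z] at h1
  have hj := sl_denom B τ hτ
  have hj' := sl_denom A _ (sl_im B τ hτ)
  have hdB := sl_det B
  have m : ∀ i j, ((A * B).1 i j : ℂ) = (A.1 i 0 : ℂ) * (B.1 0 j : ℂ) + (A.1 i 1 : ℂ) * (B.1 1 j : ℂ) := by
    intro i j
    have : (A * B).1 i j = A.1 i 0 * B.1 0 j + A.1 i 1 * B.1 1 j := by
      rw [Matrix.SpecialLinearGroup.coe_mul, Matrix.mul_apply, Fin.sum_univ_two]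
    rw [this]; push_cast; rfl
  simp only [m]
  have hQ : (∑ i, (N i : ℂ) * (z i / ((B.1 1 0 : ℂ) * τ + (B.1 1 1 : ℂ))) ^ 2) =
      (∑ i, (N i : ℂ) * z i ^ 2) / ((B.1 1 0 : ℂ) * τ + (B.1 1 1 : ℂ)) ^ 2 := by
    rw [Finset.sum_div]
    refine Finset.sum_congr rfl fun i _ => ?_
    rw [div_pow]; ring
  simp only [hQ] at h1
  generalize (∑ i, (N i : ℂ) * z i ^ 2) = Q at *
  generalize (A.1 0 0 : ℂ) = a at *
  generalize (A.1 0 1 : ℂ) = b at *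
  generalize (A.1 1 0 : ℂ) = c at *
  generalize (A.1 1 1 : ℂ) = d at *
  generalize (B.1 0 0 : ℂ) = a' at *
  generalize (B.1 0 1 : ℂ) = b' at *
  generalize (B.1 1 0 : ℂ) = c' at *
  generalize (B.1 1 1 : ℂ) = d' at *
  have hj2 : (c * a' + d * c') * τ + (c * b' + d * d') =
      (c * ((a' * τ + b') / (c' * τ + d')) + d) * (c' * τ + d') := by
    field_simp
    ring
  have hj3 : (c * a' + d * c') * τ + (c * b' + d * d') ≠ 0 := by
    rw [hj2]; exact mul_ne_zero hj' hj
  have e1 : ((a * a' + b * c') * τ + (a * b' + b * d')) / ((c * a' + d * c') * τ + (c * b' + d * d'))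
      = (a * ((a' * τ + b') / (c' * τ + d')) + b) / (c * ((a' * τ + b') / (c' * τ + d')) + d) := by
    rw [div_eq_div_iff hj3 hj', hj2]
    field_simp
    ring
  have e2 : (fun i => z i / ((c * a' + d * c') * τ + (c * b' + d * d'))) =
      (fun i => z i / (c' * τ + d') / (c * ((a' * τ + b') / (c' * τ + d')) + d)) := by
    funext i
    rw [hj2, div_div, mul_comm]
  rw [e1, e2, h1]
  have e3 : Complex.exp (π * I * (c * a' + d * c') * Q /
        ((c * a' + d * c') * τ + (c * b' + d * d'))) =
      Complex.exp (π * I * c * (Q / (c' * τ + d') ^ 2) /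
        (c * ((a' * τ + b') / (c' * τ + d')) + d)) *
      Complex.exp (π * I * c' * Q / (c' * τ + d')) := by
    rw [← Complex.exp_add]
    congr 1
    have hj4 : c * ((a' * τ + b') / (c' * τ + d')) + d =
      ((c * a' + d * c') * τ + (c * b' + d * d')) / (c' * τ + d') := by
      rw [hj2, mul_div_assoc, div_self hj, mul_one]
    rw [hj4]
    generalize hw : (c * a' + d * c') * τ + (c * b' + d * d') = w at *
    have key : (c * a' + d * c') * (c' * τ + d') = c + c' * w := by
      rw [← hw]; linear_combination c * hdB
    field_simp
    linear_combination Q * key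
  rw [e3, hj2, mul_pow]
  ring

theorem MLaw.inv {n : ℕ} {N : Fin n → ℕ} {k : ℕ} {φ : ℂ → (Fin n → ℂ) → ℂ} {A : SL2Z}
    (hA : MLaw N k φ A) : MLaw N k φ A⁻¹ := by
  intro τ hτ z
  have hi := sl_im A⁻¹ τ hτ
  have hj := sl_denom A⁻¹ τ hτ
  have h1 := hA _ hi (fun i => z i / (((A⁻¹).1 1 0 : ℂ) * τ + ((A⁻¹).1 1 1 : ℂ)))
  have hd := sl_det A
  have m := Matrix.SpecialLinearGroup.SL2_inv_expl A
  have m00 : ((A⁻¹).1 0 0 : ℂ) = A.1 1 1 := by rw [m]; simp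
  have m01 : ((A⁻¹).1 0 1 : ℂ) = -(A.1 0 1 : ℂ) := by rw [m]; simp
  have m10 : ((A⁻¹).1 1 0 : ℂ) = -(A.1 1 0 : ℂ) := by rw [m]; simp
  have m11 : ((A⁻¹).1 1 1 : ℂ) = A.1 0 0 := by rw [m]; simp
  have hj' := sl_denom A _ hi
  simp only [m00, m01, m10, m11] at hi hj h1 hj' ⊢
  have hQ : (∑ i, (N i : ℂ) * (z i / (-(A.1 1 0 : ℂ) * τ + (A.1 0 0 : ℂ))) ^ 2) =
      (∑ i, (N i : ℂ) * z i ^ 2) / (-(A.1 1 0 : ℂ) * τ + (A.1 0 0 : ℂ)) ^ 2 := by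
    rw [Finset.sum_div]
    refine Finset.sum_congr rfl fun i _ => ?_
    rw [div_pow]; ring
  simp only [hQ] at h1
  generalize (∑ i, (N i : ℂ) * z i ^ 2) = Q at *
  generalize (A.1 0 0 : ℂ) = a at *
  generalize (A.1 0 1 : ℂ) = b at *
  generalize (A.1 1 0 : ℂ) = c at *
  generalize (A.1 1 1 : ℂ) = d at *
  generalize hw : -c * τ + a = w at *
  have hinv : c * ((d * τ + -b) / w) + d = w⁻¹ := by
    field_simp
    rw [← hw]
    linear_combination hd
  have e1 : (a * ((d * τ + -b) / w) + b) / (c * ((d * τ + -b) / w) + d) = τ := by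
    rw [hinv]
    field_simp
    rw [← hw]
    linear_combination τ * hd
  have e2 : (fun i => z i / w / (c * ((d * τ + -b) / w) + d)) = z := by
    funext i
    rw [hinv]
    field_simp
  rw [e1, e2, hinv] at h1
  rw [h1]
  have e3 : Complex.exp (π * I * -c * Q / w) *
      Complex.exp (π * I * c * (Q / w ^ 2) / w⁻¹) = 1 := by
    rw [← Complex.exp_add, ← Complex.exp_zero]
    congr 1
    field_simp
    ring
  have e4 : w ^ k * (w⁻¹) ^ k = 1 := by
    rw [← mul_pow, mul_inv_cancel₀ hj, one_pow]
  generalize Complex.exp (π * I * -c * Q / w) = E1 at *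
  generalize Complex.exp (π * I * c * (Q / w ^ 2) / w⁻¹) = E2 at *
  generalize (φ ((d * τ + -b) / w) fun i => z i / w) = P at *
  linear_combination (-P) * E1 * E2 * e4 - P * e3

theorem MLaw_all {n : ℕ} {N : Fin n → ℕ} {k : ℕ} {c : (Fin n → ℤ) → ℂ}
    {φ : ℂ → (Fin n → ℂ) → ℂ} (h : PB N 1 c φ) (hS : SLaw N k φ) (A : SL2Z) : MLaw N k φ A := by
  have hm : A ∈ Subgroup.closure {ModularGroup.S, ModularGroup.T} := by
    rw [SpecialLinearGroup.SL2Z_generators]; trivial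
  induction hm using Subgroup.closure_induction with
  | mem x hx =>
    rcases hx with rfl | rfl
    · intro τ hτ z
      have := hS τ hτ z
      simpa [ModularGroup.S] using this
    · intro τ hτ z
      have := h.T_inv τ hτ z
      simpa [ModularGroup.T] using this
  | one =>
    intro τ hτ z
    simp
  | mul x y _ _ hx hy => exact hx.mul hy
  | inv x _ hx => exact hx.inv

/-- The Fourier index of a dual vector. -/
def fidx {n : ℕ} (N : Fin n → ℕ) (l : Fin n → ℤ) : ℚ × (Fin n → ℚ) :=
  (∑ i, (l i : ℚ) ^ 2 / (2 * (N i : ℚ)), fun i => (l i : ℚ) / (N i : ℚ))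

/-- The Gram matrix. -/
def gramD {n : ℕ} (N : Fin n → ℕ) : Matrix (Fin n) (Fin n) ℤ :=
  fun i j => if i = j then (N i : ℤ) else 0

theorem gram_Q {n : ℕ} (N : Fin n → ℕ) (x y : Fin n → ℚ) :
    bilinQ (gramD N) x y = ∑ i, (N i : ℚ) * x i * y i := by
  unfold bilinQ gramD
  refine Finset.sum_congr rfl fun i _ => ?_
  rw [Finset.sum_eq_single i]
  · rw [if_pos rfl]; push_cast; ring
  · intro j _ hj
    simp [Ne.symm hj]
  · simp

theorem gram_Z {n : ℕ} (N : Fin n → ℕ) (x y : Fin n → ℤ) :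
    bilinZ (gramD N) x y = ∑ i, (N i : ℤ) * x i * y i := by
  unfold bilinZ gramD
  refine Finset.sum_congr rfl fun i _ => ?_
  rw [Finset.sum_eq_single i]
  · rw [if_pos rfl]; push_cast; ring
  · intro j _ hj
    simp [Ne.symm hj]
  · simp

theorem gram_C {n : ℕ} (N : Fin n → ℕ) (x y : Fin n → ℂ) :
    bilinC (gramD N) x y = ∑ i, (N i : ℂ) * x i * y i := by
  unfold bilinC gramD
  refine Finset.sum_congr rfl fun i _ => ?_
  rw [Finset.sum_eq_single i]
  · rw [if_pos rfl]; push_cast; ring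
  · intro j _ hj
    simp [Ne.symm hj]
  · simp

theorem gram_even {n : ℕ} (N : Fin n → ℕ) (hN : ∀ i, 0 < N i ∧ Even (N i)) :
    IsEvenPosDef (gramD N) where
  symm := by
    ext i j
    simp only [Matrix.transpose_apply, gramD]
    by_cases h : i = j
    · rw [h]
    · rw [if_neg h, if_neg (Ne.symm h)]
  posdef x hx := by
    rw [gram_Q]
    obtain ⟨i, hi⟩ := Function.ne_iff.mp hx
    have hnn : ∀ j ∈ Finset.univ, 0 ≤ (N j : ℚ) * x j * x j := by
      intro j _
      rw [mul_assoc]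
      exact mul_nonneg (by positivity) (mul_self_nonneg _)
    refine Finset.sum_pos' hnn ⟨i, Finset.mem_univ i, ?_⟩
    rw [mul_assoc]
    have h1 : (0 : ℚ) < N i := by exact_mod_cast (hN i).1
    exact mul_pos h1 (mul_self_pos.mpr hi)
  even_diag i := by
    have : gramD N i i = N i := by simp [gramD]
    rw [this]
    exact_mod_cast (hN i).2.two_dvd

theorem fidx_inj {n : ℕ} (N : Fin n → ℕ) (hN : ∀ i, 0 < N i) : Function.Injective (fidx N) := by
  intro a b hab
  funext i
  have h := congrFun (congrArg Prod.snd hab) i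
  have h1 : (N i : ℚ) ≠ 0 := by exact_mod_cast (hN i).ne'
  simp only [fidx] at h
  have h2 := (div_left_inj' h1).mp h
  exact_mod_cast h2

theorem final {n k : ℕ} (hk : n = k + k) (h : Ex n k 1) :
    ∃ S : Matrix (Fin n) (Fin n) ℤ, IsEvenPosDef S ∧
      ∃ (f : ℚ × (Fin n → ℚ) → ℂ) (φ : ℂ → (Fin n → ℂ) → ℂ),
        IsJacobiForm S ((n : ℚ) / 2) 1 (fun _ => 1) (fun _ _ => 1) f φ ∧
        (∀ p, f p ≠ 0 → (∃ z : ℤ, p.1 = (z : ℚ)) ∧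
          ∀ x : Fin n → ℤ, ∃ m : ℤ, bilinQ S p.2 (fun i => (x i : ℚ)) = m) ∧
        ∃ (τ : ℂ) (z : Fin n → ℂ), 0 < τ.im ∧ φ τ z ≠ 0 := by
  obtain ⟨N, c, φ, hP, hS, hne, hN⟩ := h
  have hN0 : ∀ i, (N i : ℚ) ≠ 0 := fun i => by exact_mod_cast (hN i).1.ne'
  have hinj := fidx_inj N (fun i => (hN i).1)
  have hf : ∀ p, Function.extend (fidx N) c 0 p ≠ 0 → ∃ l, c l ≠ 0 ∧ fidx N l = p := by
    intro p hp
    by_cases hex : ∃ l, fidx N l = p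
    · obtain ⟨l, rfl⟩ := hex
      rw [hinj.extend_apply] at hp
      exact ⟨l, hp, rfl⟩
    · rw [Function.extend_apply' _ _ _ hex] at hp
      exact absurd rfl hp
  have hdual : ∀ (l x : Fin n → ℤ), bilinQ (gramD N) (fidx N l).2 (fun i => (x i : ℚ)) =
      ((∑ i, l i * x i : ℤ) : ℚ) := by
    intro l x
    rw [gram_Q]
    push_cast
    refine Finset.sum_congr rfl fun i _ => ?_
    have := hN0 i
    simp only [fidx]
    field_simp
  refine ⟨gramD N, gram_even N hN, Function.extend (fidx N) c 0, φ, ⟨hP.holo, ?_, ?_, ?_, ?_⟩, ?_,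
    hP.nonzero hne⟩
  · intro A τ hτ z
    have h1 := MLaw_all hP hS A τ hτ z
    have hkc : (((n : ℚ) / 2 : ℚ) : ℂ) = (k : ℂ) := by
      rw [hk]; push_cast; ring
    rw [h1, hkc, Complex.cpow_natCast, gram_C]
    simp only [Rat.cast_one, mul_one, one_mul, mul_assoc, pow_two]
  · intro x y τ hτ z
    have h1 := hP.elliptic (fun i => (hN i).1) x y τ hτ z
    rw [h1, gram_C, gram_Z]
    push_cast
    simp only [mul_one, one_mul, mul_assoc, pow_two]
  · intro p hp
    obtain ⟨l, hl, rfl⟩ := hf p hp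
    refine ⟨?_, ?_, ?_⟩
    · show 0 ≤ ∑ i, (l i : ℚ) ^ 2 / (2 * (N i : ℚ))
      exact Finset.sum_nonneg fun i _ => by positivity
    · intro x
      exact ⟨2 * ∑ i, l i * x i, by rw [hdual]; push_cast; ring⟩
    · rw [gram_Q]
      apply le_of_eq
      simp only [fidx]
      rw [mul_one, Finset.mul_sum, ← Finset.sum_sub_distrib]
      symm
      refine Finset.sum_eq_zero fun i _ => ?_
      have := hN0 i
      field_simp
      ring
  · intro τ hτ z
    rw [← hinj.hasSum_iff]
    · refine hs_congr ?_ (hP.hsum τ hτ z)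
      intro l
      simp only [Function.comp]
      rw [hinj.extend_apply, gram_C]
      congr 1
      unfold jterm
      congr 2
      simp only [fidx]
      push_cast
      rw [Finset.sum_mul, ← Finset.sum_add_distrib]
      refine Finset.sum_congr rfl fun i _ => ?_
      have : (N i : ℂ) ≠ 0 := by exact_mod_cast (hN i).1.ne'
      field_simp
    · intro p hp
      rw [Function.extend_apply' _ _ _ hp]
      simp
  · intro p hp
    obtain ⟨l, hl, rfl⟩ := hf p hp
    refine ⟨?_, fun x => ⟨_, hdual l x⟩⟩
    have h1 := hP.tcond l hl
    rw [Complex.exp_eq_one_iff] at h1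
    obtain ⟨m, hm⟩ := h1
    refine ⟨m, ?_⟩
    have h2 : (∑ i, ((l i : ℂ) ^ 2 / (2 * (N i : ℂ)))) = (m : ℂ) := by
      have hpi : (2 * (π : ℂ) * I) ≠ 0 := Complex.two_pi_I_ne_zero
      apply mul_left_cancel₀ hpi
      rw [hm]; ring
    have h3 : (((fidx N l).1 : ℚ) : ℂ) = ((m : ℚ) : ℂ) := by
      simp only [fidx]
      push_cast
      exact h2
    exact_mod_cast h3

/-- For every even `n ≥ 6` there is an even positive definite lattice of
rank `n` carrying a nonzero holomorphic Jacobi form of singular weight `n/2` and index `1`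
with completely trivial character (and with integral Fourier support `n ∈ ℤ`, `l ∈ L^∨`). -/
theorem statement19 (n : ℕ) (hn : 6 ≤ n) (heven : Even n) :
    ∃ S : Matrix (Fin n) (Fin n) ℤ, IsEvenPosDef S ∧
      ∃ (f : ℚ × (Fin n → ℚ) → ℂ) (φ : ℂ → (Fin n → ℂ) → ℂ),
        IsJacobiForm S ((n : ℚ) / 2) 1 (fun _ => 1) (fun _ _ => 1) f φ ∧
        (∀ p, f p ≠ 0 → (∃ z : ℤ, p.1 = (z : ℚ)) ∧
          ∀ x : Fin n → ℤ, ∃ m : ℤ, bilinQ S p.2 (fun i => (x i : ℚ)) = m) ∧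
        ∃ (τ : ℂ) (z : Fin n → ℂ), 0 < τ.im ∧ φ τ z ≠ 0 := by
  obtain ⟨m, hm⟩ := heven
  have h := Ex_all m (by omega)
  rw [← hm] at h
  exact final hm h
end
end
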